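/- Reverse parabolic Moser iteration for super-caloric functions: let p, q ∈ (1,∞] satisfy 1/p + 1/q < 2/d, let ε ∈ (0,1/4), and assume s′ − t₀ ≥ εn² and t₀ + n² − s″ ≥ εn². There exist C₁₀ < ∞ and κ > 0, depending only on d, p, q, ε, C_reg and C_riso, such that for every choice of edge weights ω, every u : [t₀,t₀+n²] × V → (0,∞) that is super-caloric on Q(n), every β ∈ (0,1/2), every α ∈ (0, β/2) and all σ′, σ with 1/2 ≤ σ′ < σ ≤ 1: ‖u‖_{β,Q(σ′n),μ^ω} ≤ (C₁₀·(max{1,‖μ^ω‖_{p,B(x₀,n)}}·max{1,‖ν^ω‖_{q,B(x₀,n)}})/(σ−σ′)²)^{κ·(1/α − 1/β)}·‖u‖_{α,Q(σn),μ^ω}. -/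

import Mathlib

open Finset MeasureTheory
open scoped ENNReal

noncomputable section

namespace RCM

variable {V : Type*}

/-- `μ^ω(x)`, the sum of the weights of edges incident to `x`. -/
def mu (nbr : V → Finset V) (ω : V → V → ℝ) (x : V) : ℝ := ∑ y ∈ nbr x, ω x y

/-- `ν^ω(x)`, the sum of the reciprocals of the weights of edges incident to `x`. -/
def nu (nbr : V → Finset V) (ω : V → V → ℝ) (x : V) : ℝ := ∑ y ∈ nbr x, (ω x y)⁻¹

/-- `(L_Y^ω f)(x)`. -/
def lap (nbr : V → Finset V) (ω : V → V → ℝ) (f : V → ℝ) (x : V) : ℝ :=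
  (mu nbr ω x)⁻¹ * ∑ y ∈ nbr x, ω x y * (f y - f x)

/-- space-averaged norm `‖f‖_{p,A}` for a real exponent `p`. -/
def nrm (A : Finset V) (p : ℝ) (f : V → ℝ) : ℝ :=
  ((A.card : ℝ)⁻¹ * ∑ x ∈ A, |f x| ^ p) ^ (1 / p)

/-- weighted space-averaged norm `‖f‖_{p,A,φ}` for a real exponent `p`. -/
def nrmW (A : Finset V) (p : ℝ) (φ : V → ℝ) (f : V → ℝ) : ℝ :=
  ((A.card : ℝ)⁻¹ * ∑ x ∈ A, |f x| ^ p * φ x) ^ (1 / p)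

/-- space-averaged norm `‖f‖_{p,A}` for an extended exponent `p ∈ (0,∞]`;
for `p = ∞` this is the maximum of `|f|` over `A`. -/
def nrmE (A : Finset V) (p : ℝ≥0∞) (f : V → ℝ) : ℝ :=
  if p = ⊤ then sSup ((fun x => |f x|) '' (A : Set V)) else nrm A p.toReal f

/-- weighted average `(u)_{A,π}`. -/
def wavg (A : Finset V) (π : V → ℝ) (u : V → ℝ) : ℝ :=
  (∑ x ∈ A, π x * u x) / ∑ x ∈ A, π x

open Classical in
/-- relative internal boundary `∂_B A`. -/
def relBdry (G : SimpleGraph V) (B A : Finset V) : Finset V :=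
  A.filter fun z => ∃ y ∈ B, y ∉ A ∧ G.Adj z y

open Classical in
/-- internal boundary `∂B`. -/
def intBdry (G : SimpleGraph V) (B : Finset V) : Finset V :=
  B.filter fun z => ∃ y, y ∉ B ∧ G.Adj z y

open Classical in
/-- Dirichlet sum `Σ_{x,y ∈ B, x∼y} ω(x,y) (u(x)-u(y))²`. -/
def dSum (G : SimpleGraph V) (ω : V → V → ℝ) (B : Finset V) (u : V → ℝ) : ℝ :=
  ∑ x ∈ B, ∑ y ∈ B, if G.Adj x y then ω x y * (u x - u y) ^ 2 else 0

/-- `E^ω_{η²}(u) = (1/2) Σ_{x,y} η(x)² ω(x,y) (u(y)-u(x))²`. -/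
def energySq (ω : V → V → ℝ) (η u : V → ℝ) : ℝ :=
  (1 / 2) * ∑' x, ∑' y, η x ^ 2 * ω x y * (u y - u x) ^ 2

/-- `E^{ω,η}(u) = (1/2) Σ_{x,y} min(η(x)²,η(y)²) ω(x,y) (u(y)-u(x))²`. -/
def energyMin (ω : V → V → ℝ) (η u : V → ℝ) : ℝ :=
  (1 / 2) * ∑' x, ∑' y, min (η x ^ 2) (η y ^ 2) * ω x y * (u y - u x) ^ 2

/-- `‖∇η‖_{ℓ∞(E)}`, the supremum of `|η(y)-η(x)|` over edges `{x,y}`. -/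
def gradSup (G : SimpleGraph V) (η : V → ℝ) : ℝ :=
  sSup {r : ℝ | ∃ x y, G.Adj x y ∧ r = |η y - η x|}

/-- `u` is caloric on `I × B`: `∂_t u = L_Y^ω u` on `I × B`. -/
def Caloric (nbr : V → Finset V) (ω : V → V → ℝ) (I : Set ℝ) (B : Set V)
    (u : ℝ → V → ℝ) : Prop :=
  ∀ x ∈ B, ∀ t ∈ I, HasDerivAt (fun s => u s x) (lap nbr ω (u t) x) t

/-- `u` is sub-caloric on `I × B`: `∂_t u ≤ L_Y^ω u` on `I × B`. -/
def SubCaloric (nbr : V → Finset V) (ω : V → V → ℝ) (I : Set ℝ) (B : Set V)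
    (u : ℝ → V → ℝ) : Prop :=
  ∀ x ∈ B, ∀ t ∈ I, ∃ d, HasDerivAt (fun s => u s x) d t ∧ d ≤ lap nbr ω (u t) x

/-- `u` is super-caloric on `I × B`: `∂_t u ≥ L_Y^ω u` on `I × B`. -/
def SuperCaloric (nbr : V → Finset V) (ω : V → V → ℝ) (I : Set ℝ) (B : Set V)
    (u : ℝ → V → ℝ) : Prop :=
  ∀ x ∈ B, ∀ t ∈ I, ∃ d, HasDerivAt (fun s => u s x) d t ∧ lap nbr ω (u t) x ≤ d

/-- space-time norm `‖u‖_{p,[a,b]×B,φ}`. -/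
def nrmST (a b : ℝ) (B : Finset V) (p : ℝ) (φ : V → ℝ) (u : ℝ → V → ℝ) : ℝ :=
  ((b - a)⁻¹ * ∫ t in a..b, nrmW B p φ (u t) ^ p) ^ (1 / p)

end RCM

/-!
Testing super-caloricity against `η² u ^ (γ - 1)` with `0 < γ ≤ 1 / 2` and a cutoff `η` bounds, on a
smaller cylinder, both the supremum in time of the mass `∑ u ^ γ μ` and the Dirichlet energy of
`u ^ (γ / 2)` by the space-time mass on a larger cylinder. The isoperimetric inequality gives a
Sobolev inequality weighted by `‖ν‖_q`; interpolating it with the bound on the mass, at the price of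
`‖μ‖_p`, improves the exponent from `γ` to `(2 - l) γ`, where `l < 1` is exactly the condition
`1 / p + 1 / q < 2 / d`. Iterating over geometrically shrinking cylinders reaches `β` from a
starting exponent `γ ≤ α` with `(2 - l) ^ k γ = β` and `γ` comparable to `α`; the powers of
`1 / (σ - σ')` lost on the way sum to a multiple of `1 / γ`. Jensen's inequality passes from `γ` to
`α`. As `α < β / 2`, the exponent `1 / α - 1 / β` is comparable to `1 / γ`, so it absorbs all the
constants.
-/

namespace RCM

variable {V : Type*}

section EdgeEnergy

variable {γ a b : ℝ}

theorem sq_rpow_half (ha : 0 ≤ a) : (a ^ (γ / 2)) ^ 2 = a ^ γ := by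
  rw [← Real.rpow_mul_natCast ha]
  norm_num

theorem sq_one_sub_rpow_half_le {r : ℝ} (hγ : 0 < γ) (hγ' : γ ≤ 1 / 2) (hr : 0 < r)
    (hr' : r ≤ 1) : (1 - r ^ (γ / 2)) ^ 2 ≤ γ * (r ^ (γ - 1) - 1) * (1 - r) := by
  have h_neg_half : r ^ (-(1 / 2) : ℝ) ≤ r ^ (γ - 1) :=
    Real.rpow_le_rpow_of_exponent_ge hr hr' (by linarith)
  have h_ge : r ≤ r ^ (γ / 2) := by
    simpa using Real.rpow_le_rpow_of_exponent_ge hr hr' (show γ / 2 ≤ 1 by linarith)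
  have h_le_one : r ^ (γ / 2) ≤ 1 := Real.rpow_le_one hr.le hr' (by linarith)
  have h_log_le : 1 + Real.log r * (γ / 2) ≤ r ^ (γ / 2) := by
    rw [Real.rpow_def_of_pos hr]
    linarith [Real.add_one_le_exp (Real.log r * (γ / 2))]
  have h_le_log : -(1 / 2) * Real.log r ≤ r ^ (-(1 / 2) : ℝ) - 1 := by
    rw [← Real.log_rpow hr]
    exact Real.log_le_sub_one_of_pos (Real.rpow_pos_of_pos hr _)
  have h_linear : 1 - r ^ (γ / 2) ≤ γ * (r ^ (γ - 1) - 1) := by nlinarith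
  nlinarith

theorem sq_rpow_half_sub_rpow_half_le (hγ : 0 < γ) (hγ' : γ ≤ 1 / 2) (ha : 0 < a) (hb : 0 < b) :
    (a ^ (γ / 2) - b ^ (γ / 2)) ^ 2 ≤ γ * (a ^ (γ - 1) - b ^ (γ - 1)) * (b - a) := by
  wlog hab : b ≤ a generalizing a b
  · linarith [this hb ha (le_of_not_ge hab)]
  obtain ⟨r, hr, rfl⟩ : ∃ r, 0 < r ∧ b = r * a := ⟨b / a, div_pos hb ha, by field_simp⟩
  have h_scale : a ^ (γ - 1) * a = a ^ γ := by
    rw [← Real.rpow_add_one ha.ne', sub_add_cancel]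
  calc (a ^ (γ / 2) - (r * a) ^ (γ / 2)) ^ 2
      = a ^ γ * (1 - r ^ (γ / 2)) ^ 2 := by
        rw [Real.mul_rpow hr.le ha.le, ← sq_rpow_half (γ := γ) ha.le]; ring
    _ ≤ a ^ γ * (γ * (r ^ (γ - 1) - 1) * (1 - r)) := by
        gcongr
        exact sq_one_sub_rpow_half_le hγ hγ' hr (by nlinarith)
    _ = γ * (a ^ (γ - 1) - (r * a) ^ (γ - 1)) * (r * a - a) := by
        rw [Real.mul_rpow hr.le ha.le, ← h_scale]; ring

theorem rpow_sub_one_mul_sub_le (hγ : 0 ≤ γ) (hγ' : γ ≤ 2) (ha : 0 < a) (hb : 0 < b) :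
    γ * a ^ (γ - 1) * (a - b) ≤ 2 * a ^ (γ / 2) * (a ^ (γ / 2) - b ^ (γ / 2)) := by
  obtain ⟨r, hr, rfl⟩ : ∃ r, 0 < r ∧ b = r * a := ⟨b / a, div_pos hb ha, by field_simp⟩
  have h_scale : a ^ (γ - 1) * a = a ^ γ := by
    rw [← Real.rpow_add_one ha.ne', sub_add_cancel]
  have h_bernoulli : r ^ (γ / 2) ≤ 1 + γ / 2 * (r - 1) := by
    simpa using rpow_one_add_le_one_add_mul_self (s := r - 1) (p := γ / 2) (by linarith)
      (by linarith) (by linarith)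
  calc γ * a ^ (γ - 1) * (a - r * a)
      = a ^ γ * (γ * (1 - r)) := by rw [← h_scale]; ring
    _ ≤ a ^ γ * (2 * (1 - r ^ (γ / 2))) :=
        mul_le_mul_of_nonneg_left (by linarith) (by positivity)
    _ = 2 * a ^ (γ / 2) * (a ^ (γ / 2) - (r * a) ^ (γ / 2)) := by
        rw [Real.mul_rpow hr.le ha.le, ← sq_rpow_half (γ := γ) ha.le]; ring

theorem sq_mul_rpow_half_sub_le_of_le {h k : ℝ} (hγ : 0 < γ) (hγ' : γ ≤ 1 / 2) (ha : 0 < a)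
    (hb : 0 < b) (hk : 0 ≤ k) (hkh : k ≤ h) :
    (h * a ^ (γ / 2) - k * b ^ (γ / 2)) ^ 2 ≤
      4 * (γ * (h ^ 2 * a ^ (γ - 1) - k ^ 2 * b ^ (γ - 1)) * (b - a)) +
        42 * (h - k) ^ 2 * a ^ γ := by
  have h_diag := mul_le_mul_of_nonneg_left (sq_rpow_half_sub_rpow_half_le hγ hγ' ha hb)
    (show 0 ≤ 4 * k ^ 2 by positivity)
  have h_cross := mul_le_mul_of_nonneg_left
    (rpow_sub_one_mul_sub_le hγ.le (by linarith) ha hb)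
    (show 0 ≤ 4 * (h ^ 2 - k ^ 2) by nlinarith)
  have hAB : 0 ≤ a ^ (γ / 2) * b ^ (γ / 2) := by positivity
  rw [← sq_rpow_half (γ := γ) ha.le]
  obtain ⟨m, rfl⟩ : ∃ m, h = k + m := ⟨h - k, by ring⟩
  generalize a ^ (γ / 2) = A, b ^ (γ / 2) = B at *
  have h_cross_nonneg : 0 ≤ m ^ 2 * (A * B) := by positivity
  nlinarith [sq_nonneg (k * (A - B) - 8 * (m * A)), sq_nonneg (k * (A - B) - m * A),
    sq_nonneg (m * A)]

theorem sq_mul_rpow_half_sub_le {h k : ℝ} (hγ : 0 < γ) (hγ' : γ ≤ 1 / 2) (ha : 0 < a)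
    (hb : 0 < b) (hh : 0 ≤ h) (hk : 0 ≤ k) :
    (h * a ^ (γ / 2) - k * b ^ (γ / 2)) ^ 2 ≤
      4 * (γ * (h ^ 2 * a ^ (γ - 1) - k ^ 2 * b ^ (γ - 1)) * (b - a)) +
        42 * (h - k) ^ 2 * ((if 0 < h then a ^ γ else 0) + if 0 < k then b ^ γ else 0) := by
  wlog hkh : k ≤ h generalizing a b h k
  · have := this hb ha hk hh (le_of_not_ge hkh)
    linarith
  rcases hh.eq_or_lt with rfl | h_pos
  · obtain rfl : k = 0 := le_antisymm hkh hk
    simp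
  · have : 0 ≤ if 0 < k then b ^ γ else 0 := by positivity
    rw [if_pos h_pos]
    nlinarith [sq_mul_rpow_half_sub_le_of_le hγ hγ' ha hb hk hkh,
      mul_nonneg (sq_nonneg (h - k)) this]

end EdgeEnergy

section Holder

variable {ι : Type*} {f g h : ι → ℝ} {θ₁ θ₂ θ₃ : ℝ}

theorem sum_rpow_mul_rpow_le (s : Finset ι) (hθ₁ : 0 < θ₁) (hθ₂ : 0 < θ₂)
    (hθ : θ₁ + θ₂ = 1) (hf : ∀ i ∈ s, 0 ≤ f i) (hg : ∀ i ∈ s, 0 ≤ g i) :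
    ∑ i ∈ s, f i ^ θ₁ * g i ^ θ₂ ≤ (∑ i ∈ s, f i) ^ θ₁ * (∑ i ∈ s, g i) ^ θ₂ := by
  have h_conj : (1 / θ₁).HolderConjugate (1 / θ₂) :=
    Real.holderConjugate_iff.2 ⟨by rw [lt_div_iff₀ hθ₁]; linarith, by simpa using hθ⟩
  have rpow_rpow : ∀ {φ : ι → ℝ} {θ : ℝ}, 0 < θ → (∀ i ∈ s, 0 ≤ φ i) →
      ∑ i ∈ s, (φ i ^ θ) ^ (1 / θ) = ∑ i ∈ s, φ i := fun hθ hφ =>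
    sum_congr rfl fun i hi => by rw [one_div, Real.rpow_rpow_inv (hφ i hi) hθ.ne']
  have h_holder := Real.inner_le_Lp_mul_Lq_of_nonneg s h_conj
    (fun i hi => Real.rpow_nonneg (hf i hi) θ₁) (fun i hi => Real.rpow_nonneg (hg i hi) θ₂)
  rwa [rpow_rpow hθ₁ hf, rpow_rpow hθ₂ hg, one_div_one_div, one_div_one_div] at h_holder

theorem sum_rpow_one_sub_inv_mul_le (s : Finset ι) {q : ℝ} (hq : 1 < q) (hf : ∀ i ∈ s, 0 ≤ f i)
    (hg : ∀ i ∈ s, 0 ≤ g i) : ∑ i ∈ s, f i ^ (1 - 1 / q) * g i ≤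
      (∑ i ∈ s, f i) ^ (1 - 1 / q) * (∑ i ∈ s, g i ^ q) ^ (1 / q) := by
  have hq0 : 0 < q := by linarith
  convert sum_rpow_mul_rpow_le s (sub_pos.2 ((div_lt_one hq0).2 hq)) (one_div_pos.2 hq0)
    (by ring) hf fun i hi => Real.rpow_nonneg (hg i hi) q using 3 with i hi
  rw [one_div, Real.rpow_rpow_inv (hg i hi) hq0.ne']

theorem sum_rpow_mul_rpow_mul_rpow_le (s : Finset ι) (hθ₁ : 0 < θ₁) (hθ₂ : 0 < θ₂)
    (hθ₃ : 0 < θ₃) (hθ : θ₁ + θ₂ + θ₃ = 1) (hf : ∀ i ∈ s, 0 ≤ f i) (hg : ∀ i ∈ s, 0 ≤ g i)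
    (hh : ∀ i ∈ s, 0 ≤ h i) :
    ∑ i ∈ s, f i ^ θ₁ * (g i ^ θ₂ * h i ^ θ₃) ≤
      (∑ i ∈ s, f i) ^ θ₁ * ((∑ i ∈ s, g i) ^ θ₂ * (∑ i ∈ s, h i) ^ θ₃) := by
  have h_pos : 0 < θ₂ + θ₃ := by linarith
  have merge : ∀ {x y : ℝ}, 0 ≤ x → 0 ≤ y →
      (x ^ (θ₂ / (θ₂ + θ₃)) * y ^ (θ₃ / (θ₂ + θ₃))) ^ (θ₂ + θ₃) = x ^ θ₂ * y ^ θ₃ := by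
    intro x y hx hy
    rw [Real.mul_rpow (by positivity) (by positivity), ← Real.rpow_mul hx, ← Real.rpow_mul hy,
      div_mul_cancel₀ _ h_pos.ne', div_mul_cancel₀ _ h_pos.ne']
  have hgh : ∀ i ∈ s, 0 ≤ g i ^ (θ₂ / (θ₂ + θ₃)) * h i ^ (θ₃ / (θ₂ + θ₃)) := fun i hi =>
    mul_nonneg (Real.rpow_nonneg (hg i hi) _) (Real.rpow_nonneg (hh i hi) _)
  calc ∑ i ∈ s, f i ^ θ₁ * (g i ^ θ₂ * h i ^ θ₃)
      = ∑ i ∈ s, f i ^ θ₁ *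
          (g i ^ (θ₂ / (θ₂ + θ₃)) * h i ^ (θ₃ / (θ₂ + θ₃))) ^ (θ₂ + θ₃) :=
        sum_congr rfl fun i hi => by rw [merge (hg i hi) (hh i hi)]
    _ ≤ (∑ i ∈ s, f i) ^ θ₁ *
          (∑ i ∈ s, g i ^ (θ₂ / (θ₂ + θ₃)) * h i ^ (θ₃ / (θ₂ + θ₃))) ^ (θ₂ + θ₃) :=
        sum_rpow_mul_rpow_le s hθ₁ h_pos (by linarith) hf hgh
    _ ≤ (∑ i ∈ s, f i) ^ θ₁ * ((∑ i ∈ s, g i) ^ (θ₂ / (θ₂ + θ₃)) *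
          (∑ i ∈ s, h i) ^ (θ₃ / (θ₂ + θ₃))) ^ (θ₂ + θ₃) := by
        have := sum_nonneg hf
        have := sum_nonneg hgh
        gcongr
        exact sum_rpow_mul_rpow_le s (div_pos hθ₂ h_pos) (div_pos hθ₃ h_pos)
          (by field_simp) hg hh
    _ = (∑ i ∈ s, f i) ^ θ₁ * ((∑ i ∈ s, g i) ^ θ₂ * (∑ i ∈ s, h i) ^ θ₃) := by
        rw [merge (sum_nonneg hg) (sum_nonneg hh)]

end Holder

section Isoperimetry

variable {G : SimpleGraph V} {nbr : V → Finset V} {ball : V → ℝ → Finset V} {d : ℕ}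
  {Creg Criso : ℝ}

/-- `ball x r` is the closed ball `B(x, r)` of the graph distance. -/
def IsBallFamily (G : SimpleGraph V) (ball : V → ℝ → Finset V) : Prop :=
  ∀ (x : V) (r : ℝ) (y : V), y ∈ ball x r ↔ (G.dist x y : ℝ) ≤ r

/-- Volume regularity of order `d`: balls of radius `r ≥ 1` have volume comparable to `r ^ d`. -/
def VolumeRegular (ball : V → ℝ → Finset V) (d : ℕ) (Creg : ℝ) : Prop :=
  ∀ (x : V) (r : ℝ), 1 ≤ r →
    Creg⁻¹ * r ^ d ≤ ((ball x r).card : ℝ) ∧ ((ball x r).card : ℝ) ≤ Creg * r ^ d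

/-- The relative isoperimetric inequality for subsets of at most half the volume of a ball. -/
def RelIsoperimetric (G : SimpleGraph V) (ball : V → ℝ → Finset V) (Criso : ℝ) : Prop :=
  ∀ (x : V) (r : ℝ) (A : Finset V), 1 ≤ r → A.Nonempty → A ⊆ ball x r →
    (A.card : ℝ) < ((ball x r).card : ℝ) / 2 →
    Criso / r ≤ ((relBdry G (ball x r) A).card : ℝ) / (A.card : ℝ)

open Classical in
/-- The size of the edge boundary of `A`: the number of edges joining `A` to its complement. -/
def edgeBdry (nbr : V → Finset V) (A : Finset V) : ℕ := ∑ x ∈ A, #{y ∈ nbr x | y ∉ A}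

/-- The global isoperimetric inequality `|A| ^ θ ≤ C |∂_E A|` for the edge boundary `∂_E A`. -/
def EdgeIsoperimetric (nbr : V → Finset V) (θ C : ℝ) : Prop :=
  ∀ A : Finset V, A.Nonempty → (#A : ℝ) ^ θ ≤ C * edgeBdry nbr A

theorem IsBallFamily.center_mem (hball : IsBallFamily G ball) (x : V) {r : ℝ} (hr : 0 ≤ r) :
    x ∈ ball x r := (hball x r x).2 (by simpa using hr)

theorem IsBallFamily.mem_comm (hball : IsBallFamily G ball) {x y : V} {r : ℝ} :
    x ∈ ball y r ↔ y ∈ ball x r := by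
  rw [hball, hball, SimpleGraph.dist_comm]

theorem IsBallFamily.mono (hball : IsBallFamily G ball) (x : V) : Monotone (ball x) :=
  fun _ _ hrs _ hy => (hball x _ _).2 (((hball x _ _).1 hy).trans hrs)

theorem VolumeRegular.one_le [Nonempty V] (hreg : VolumeRegular ball d Creg) (hC : 0 < Creg) :
    1 ≤ Creg := by
  have h := hreg (Classical.arbitrary V) 1 le_rfl
  have : Creg⁻¹ ≤ Creg := by simpa using h.1.trans h.2
  rw [inv_le_iff_one_le_mul₀ hC] at this
  nlinarith

theorem card_intBdry_le_edgeBdry (hnbr : ∀ x y, y ∈ nbr x ↔ G.Adj x y) (A : Finset V) :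
    #(intBdry G A) ≤ edgeBdry nbr A := by
  classical
  rw [intBdry, card_filter, edgeBdry]
  refine sum_le_sum fun x _ => ?_
  split_ifs with h
  · obtain ⟨y, hy, hxy⟩ := h
    exact card_pos.2 ⟨y, mem_filter.2 ⟨(hnbr x y).2 hxy, hy⟩⟩
  · exact Nat.zero_le _

open Classical in
/- Sum the local inequality over all `x` and exchange the order of summation: each vertex of `A`
or of its boundary is counted `|b z|` times. -/
theorem mul_card_le_card_intBdry_mul {b : V → Finset V} {A : Finset V} {h m M : ℝ}
    (hb : ∀ x y, x ∈ b y ↔ y ∈ b x) (hh : 0 ≤ h) (hm : ∀ z, m ≤ #(b z)) (hM : ∀ z, #(b z) ≤ M)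
    (hlocal : ∀ x, h * #{z ∈ A | z ∈ b x} ≤ #(relBdry G (b x) {z ∈ A | z ∈ b x})) :
    h * (#A * m) ≤ #(intBdry G A) * M := by
  set T := A.biUnion b
  have double_count : ∀ E : Finset V,
      ∑ x ∈ T, (#{z ∈ E | z ∈ b x} : ℝ) = ∑ z ∈ E, (#{x ∈ T | z ∈ b x} : ℝ) := fun E => by
    exact_mod_cast sum_card_bipartiteAbove_eq_sum_card_bipartiteBelow (fun x z => z ∈ b x)
  have card_ge : ∀ z ∈ A, m ≤ #{x ∈ T | z ∈ b x} := fun z hz => (hm z).trans <| by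
    exact_mod_cast card_le_card fun x hx =>
      mem_filter.2 ⟨mem_biUnion.2 ⟨z, hz, hx⟩, (hb z x).2 hx⟩
  have card_le : ∀ z, (#{x ∈ T | z ∈ b x} : ℝ) ≤ M := fun z => le_trans (by
    exact_mod_cast card_le_card fun x hx => (hb x z).2 (mem_filter.1 hx).2) (hM z)
  have relBdry_le : ∀ x, (#(relBdry G (b x) {z ∈ A | z ∈ b x}) : ℝ) ≤
      #{z ∈ intBdry G A | z ∈ b x} := fun x => by
    refine mod_cast card_le_card fun w hw => ?_
    simp only [relBdry, intBdry, mem_filter] at hw ⊢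
    obtain ⟨⟨hwA, hwb⟩, y, hyb, hyA, hadj⟩ := hw
    exact ⟨⟨hwA, y, fun hy => hyA ⟨hy, hyb⟩, hadj⟩, hwb⟩
  calc h * (#A * m)
      ≤ h * ∑ x ∈ T, (#{z ∈ A | z ∈ b x} : ℝ) := by
        rw [double_count, ← nsmul_eq_mul]
        exact mul_le_mul_of_nonneg_left (card_nsmul_le_sum _ _ _ card_ge) hh
    _ ≤ ∑ x ∈ T, (#{z ∈ intBdry G A | z ∈ b x} : ℝ) := by
        rw [mul_sum]
        exact sum_le_sum fun x _ => (hlocal x).trans (relBdry_le x)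
    _ ≤ #(intBdry G A) * M := by
        rw [double_count, ← nsmul_eq_mul]
        exact sum_le_card_nsmul _ _ _ fun z _ => card_le z

theorem card_le_mul_card_intBdry (hball : IsBallFamily G ball) (hCreg : 0 < Creg)
    (hCriso : 0 < Criso) (hreg : VolumeRegular ball d Creg) (hriso : RelIsoperimetric G ball Criso)
    {r : ℝ} (hr : 1 ≤ r) {A : Finset V} (hA : 2 * (#A : ℝ) < Creg⁻¹ * r ^ d) :
    (#A : ℝ) ≤ Creg ^ 2 / Criso * r * #(intBdry G A) := by
  classical
  have hr0 : 0 < r := by linarith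
  have hlocal : ∀ x, Criso / r * #{z ∈ A | z ∈ ball x r} ≤
      #(relBdry G (ball x r) {z ∈ A | z ∈ ball x r}) := by
    intro x
    rcases {z ∈ A | z ∈ ball x r}.eq_empty_or_nonempty with h_empty | h_ne
    · simp [h_empty]
    rw [← le_div_iff₀ (by exact_mod_cast h_ne.card_pos)]
    refine hriso x r _ hr h_ne (fun y hy => (mem_filter.1 hy).2) ?_
    have : (#{z ∈ A | z ∈ ball x r} : ℝ) ≤ #A := mod_cast card_filter_le _ _
    linarith [(hreg x r hr).1]
  have h_avg := mul_card_le_card_intBdry_mul (fun _ _ => hball.mem_comm)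
    (div_pos hCriso hr0).le (fun z => (hreg z r hr).1) (fun z => (hreg z r hr).2) hlocal
  refine le_of_mul_le_mul_left ?_ (show 0 < Criso / r * (Creg⁻¹ * r ^ d) by positivity)
  calc Criso / r * (Creg⁻¹ * r ^ d) * #A
      = Criso / r * (#A * (Creg⁻¹ * r ^ d)) := by ring
    _ ≤ #(intBdry G A) * (Creg * r ^ d) := h_avg
    _ = Criso / r * (Creg⁻¹ * r ^ d) * (Creg ^ 2 / Criso * r * #(intBdry G A)) := by
        field_simp

/-- The constant in the isoperimetric inequality implied by volume regularity and the relative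
isoperimetric inequality. -/
def isoConst (d : ℕ) (Creg Criso : ℝ) : ℝ := Creg ^ 2 * (3 * Creg) ^ (1 / (d : ℝ)) / Criso

theorem isoConst_nonneg (d : ℕ) (hCreg : 0 ≤ Creg) (hCriso : 0 ≤ Criso) :
    0 ≤ isoConst d Creg Criso := by
  unfold isoConst
  positivity

theorem edgeIsoperimetric_of_relIsoperimetric [Nonempty V]
    (hnbr : ∀ x y, y ∈ nbr x ↔ G.Adj x y) (hball : IsBallFamily G ball) (hd : d ≠ 0)
    (hCreg : 0 < Creg) (hCriso : 0 < Criso) (hreg : VolumeRegular ball d Creg)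
    (hriso : RelIsoperimetric G ball Criso) :
    EdgeIsoperimetric nbr (1 - 1 / (d : ℝ)) (isoConst d Creg Criso) := by
  intro A hA
  have hcard : (1 : ℝ) ≤ #A := mod_cast hA.card_pos
  have hcard0 : (0 : ℝ) < #A := by linarith
  have hC1 := hreg.one_le hCreg
  -- A radius at which `A` fills at most a third of every ball.
  obtain ⟨r, hr⟩ : ∃ r : ℝ, r = (3 * Creg * #A) ^ (1 / (d : ℝ)) := ⟨_, rfl⟩
  have hrd : r ^ d = 3 * Creg * #A := by
    rw [hr, one_div, Real.rpow_inv_natCast_pow (by positivity) hd]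
  have hr1 : 1 ≤ r := hr ▸ Real.one_le_rpow (by nlinarith) (by positivity)
  have h_small : 2 * (#A : ℝ) < Creg⁻¹ * r ^ d := by
    rw [hrd, show Creg⁻¹ * (3 * Creg * #A) = 3 * (#A : ℝ) by field_simp]
    linarith
  have h_bdry : (#(intBdry G A) : ℝ) ≤ edgeBdry nbr A := mod_cast card_intBdry_le_edgeBdry hnbr A
  rw [Real.rpow_sub hcard0, Real.rpow_one, div_le_iff₀ (by positivity)]
  calc (#A : ℝ) ≤ Creg ^ 2 / Criso * r * #(intBdry G A) :=
        card_le_mul_card_intBdry hball hCreg hCriso hreg hriso hr1 h_small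
    _ ≤ Creg ^ 2 / Criso * r * edgeBdry nbr A := by gcongr
    _ = isoConst d Creg Criso * edgeBdry nbr A * (#A : ℝ) ^ (1 / (d : ℝ)) := by
        rw [hr, Real.mul_rpow (by positivity) (by positivity), isoConst]
        ring

end Isoperimetry

section Sobolev

variable {nbr : V → Finset V} {ω : V → V → ℝ}

/-- `ω` is a family of positive, symmetric edge weights on the locally finite graph with neighbour
sets `nbr`, extended by zero to non-edges. Isolated vertices are excluded, so that `μ^ω > 0`. -/
structure IsConductance (nbr : V → Finset V) (ω : V → V → ℝ) : Prop where
  symm : ∀ x y, ω x y = ω y x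
  pos : ∀ x, ∀ y ∈ nbr x, 0 < ω x y
  eq_zero : ∀ x, ∀ y ∉ nbr x, ω x y = 0
  nonempty : ∀ x, (nbr x).Nonempty

theorem IsConductance.nonneg (hω : IsConductance nbr ω) (x y : V) : 0 ≤ ω x y := by
  by_cases hy : y ∈ nbr x
  · exact (hω.pos x y hy).le
  · exact (hω.eq_zero x y hy).ge

theorem IsConductance.mu_pos (hω : IsConductance nbr ω) (x : V) : 0 < mu nbr ω x :=
  sum_pos (hω.pos x) (hω.nonempty x)

theorem IsConductance.nu_nonneg (hω : IsConductance nbr ω) (x : V) : 0 ≤ nu nbr ω x :=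
  sum_nonneg fun y _ => inv_nonneg.2 (hω.nonneg x y)

/-- The Dirichlet energy of `g` on the oriented edges issuing from `A`. -/
def dirichlet (nbr : V → Finset V) (ω : V → V → ℝ) (A : Finset V) (g : V → ℝ) : ℝ :=
  ∑ x ∈ A, ∑ y ∈ nbr x, ω x y * (g x - g y) ^ 2

theorem IsConductance.dirichlet_nonneg (hω : IsConductance nbr ω) (A : Finset V) (g : V → ℝ) :
    0 ≤ dirichlet nbr ω A g :=
  sum_nonneg fun x _ => sum_nonneg fun y _ => mul_nonneg (hω.nonneg x y) (sq_nonneg _)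

/-- The `ℓ¹` norm of the positive part of the gradient of `f` on the oriented edges issuing from
`A`. If `f ≥ 0` vanishes off `A`, this is the total variation of `f`. -/
def posVariation (nbr : V → Finset V) (A : Finset V) (f : V → ℝ) : ℝ :=
  ∑ x ∈ A, ∑ y ∈ nbr x, max 0 (f x - f y)

theorem posVariation_eq_mul_edgeBdry_add {A : Finset V} {f : V → ℝ} {m : ℝ} (hm : 0 ≤ m)
    (hf : ∀ x ∈ A, m ≤ f x) (hf0 : ∀ x, x ∉ A → f x = 0) :
    posVariation nbr A f =
      m * edgeBdry nbr A + posVariation nbr A ((A : Set V).indicator fun x => f x - m) := by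
  classical
  simp only [posVariation, edgeBdry, card_filter, Nat.cast_sum, mul_sum, ← sum_add_distrib]
  refine sum_congr rfl fun x hx => sum_congr rfl fun y _ => ?_
  by_cases hy : y ∈ A
  · simp [hx, hy]
  · have := hf x hx
    simp only [Set.indicator, mem_coe, hx, hy, hf0 y hy, if_true, if_false, not_false_eq_true,
      Nat.cast_one, mul_one, sub_zero]
    rw [max_eq_right (by linarith), max_eq_right (by linarith)]
    ring

theorem EdgeIsoperimetric.rpow_sum_rpow_le {C s : ℝ} (hiso : EdgeIsoperimetric nbr (1 / s) C)
    (hs : 1 ≤ s) (A : Finset V) {f : V → ℝ} (hf : ∀ x, 0 ≤ f x)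
    (hf0 : ∀ x, x ∉ A → f x = 0) :
    (∑ x ∈ A, f x ^ s) ^ (1 / s) ≤ C * posVariation nbr A f := by
  classical
  have hs0 : 0 < s := by linarith
  induction A using Finset.strongInduction generalizing f with
  | H A ih =>
  rcases A.eq_empty_or_nonempty with rfl | hA
  · simp [posVariation, hs0.ne']
  -- Peel off the lowest level set, on which `f` is constant, by Minkowski's inequality.
  obtain ⟨z, hz, hmin⟩ := exists_min_image A f hA
  set g : V → ℝ := (A : Set V).indicator fun x => f x - f z
  have hgA : ∀ x ∈ A, g x = f x - f z := fun x hx => Set.indicator_of_mem (mem_coe.2 hx) _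
  have hg : ∀ x, 0 ≤ g x := Set.indicator_nonneg fun x hx => sub_nonneg.2 (hmin x hx)
  have hg0 : ∀ x, x ∉ A.erase z → g x = 0 := by
    intro x hx
    by_cases hxA : x ∈ A
    · obtain rfl : x = z := by by_contra hxz; exact hx (mem_erase.2 ⟨hxz, hxA⟩)
      simp [hgA x hxA]
    · exact Set.indicator_of_notMem (mem_coe.not.2 hxA) _
  have hIH : (∑ x ∈ A, g x ^ s) ^ (1 / s) ≤ C * posVariation nbr A g := by
    convert ih (A.erase z) (erase_ssubset hz) hg hg0 using 2
    · exact (sum_subset (erase_subset z A) fun x _ hx => by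
        rw [hg0 x hx, Real.zero_rpow hs0.ne']).symm
    · exact (sum_subset (erase_subset z A) fun x _ hx => sum_eq_zero fun y _ => by
        rw [hg0 x hx]; exact max_eq_left (by linarith [hg y])).symm
  calc (∑ x ∈ A, f x ^ s) ^ (1 / s)
      = (∑ x ∈ A, (f z + g x) ^ s) ^ (1 / s) := by
        congr 1
        exact sum_congr rfl fun x hx => by rw [hgA x hx, add_sub_cancel]
    _ ≤ (∑ _x ∈ A, f z ^ s) ^ (1 / s) + (∑ x ∈ A, g x ^ s) ^ (1 / s) :=
        Real.Lp_add_le_of_nonneg A hs (fun _ _ => hf z) fun x _ => hg x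
    _ = f z * (#A : ℝ) ^ (1 / s) + (∑ x ∈ A, g x ^ s) ^ (1 / s) := by
        rw [sum_const, nsmul_eq_mul, Real.mul_rpow (by positivity) (Real.rpow_nonneg (hf z) s),
          one_div, Real.rpow_rpow_inv (hf z) hs0.ne', mul_comm]
    _ ≤ f z * (C * edgeBdry nbr A) + C * posVariation nbr A g :=
        add_le_add (mul_le_mul_of_nonneg_left (hiso A hA) (hf z)) hIH
    _ = C * posVariation nbr A f := by
        rw [posVariation_eq_mul_edgeBdry_add (hf z) hmin hf0]; ring

theorem rpow_sub_rpow_le {a b τ : ℝ} (ha : 0 ≤ a) (hb : 0 ≤ b) (hτ : 1 ≤ τ) :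
    a ^ τ - b ^ τ ≤ τ * (a ^ (τ - 1) * |a - b|) := by
  rcases ha.eq_or_lt with rfl | ha
  · have : 0 ≤ τ * (0 ^ (τ - 1) * |0 - b|) := by positivity
    rw [Real.zero_rpow (by linarith)]
    linarith [Real.rpow_nonneg hb τ]
  obtain ⟨r, hr, rfl⟩ : ∃ r, 0 ≤ r ∧ b = r * a := ⟨b / a, by positivity, by field_simp⟩
  have h_scale : a ^ τ = a ^ (τ - 1) * a := by rw [← Real.rpow_add_one ha.ne', sub_add_cancel]
  have h_bernoulli : 1 + τ * (r - 1) ≤ r ^ τ := by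
    simpa using one_add_mul_self_le_rpow_one_add (s := r - 1) (by linarith) hτ
  calc a ^ τ - (r * a) ^ τ
      = a ^ τ * (1 - r ^ τ) := by rw [Real.mul_rpow hr ha.le]; ring
    _ ≤ a ^ τ * (τ * (1 - r)) := mul_le_mul_of_nonneg_left (by linarith) (by positivity)
    _ = τ * (a ^ (τ - 1) * (a - r * a)) := by rw [h_scale]; ring
    _ ≤ τ * (a ^ (τ - 1) * |a - r * a|) := by gcongr; exact le_abs_self _

theorem posVariation_rpow_le {A : Finset V} {g : V → ℝ} {τ : ℝ} (hg : ∀ x, 0 ≤ g x)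
    (hτ : 1 ≤ τ) : posVariation nbr A (fun x => g x ^ τ) ≤
      τ * ∑ x ∈ A, ∑ y ∈ nbr x, g x ^ (τ - 1) * |g x - g y| := by
  simp only [posVariation, mul_sum]
  refine sum_le_sum fun x _ => sum_le_sum fun y _ =>
    max_le ?_ (rpow_sub_rpow_le (hg x) (hg y) hτ)
  have := hg x
  positivity

theorem IsConductance.sq_sum_mul_abs_sub_le (hω : IsConductance nbr ω) (A : Finset V)
    (a g : V → ℝ) : (∑ x ∈ A, ∑ y ∈ nbr x, a x * |g x - g y|) ^ 2 ≤
      (∑ x ∈ A, a x ^ 2 * nu nbr ω x) * dirichlet nbr ω A g := by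
  simp only [nu, mul_sum (nbr _), dirichlet, sum_sigma']
  refine sum_sq_le_sum_mul_sum_of_sq_le_mul _ ?_ ?_ ?_ <;> rintro ⟨x, y⟩ hxy <;>
    have := hω.pos x y (mem_sigma.1 hxy).2
  · positivity
  · positivity
  · simp only [mul_pow, sq_abs]
    field_simp
    rfl

theorem EdgeIsoperimetric.rpow_sum_rpow_mul_le {C s τ : ℝ}
    (hiso : EdgeIsoperimetric nbr (1 / s) C) (hs : 1 ≤ s) (hC : 0 ≤ C) (hτ : 1 ≤ τ)
    (A : Finset V) {g : V → ℝ} (hg : ∀ x, 0 ≤ g x) (hg0 : ∀ x, x ∉ A → g x = 0) :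
    (∑ x ∈ A, g x ^ (τ * s)) ^ (1 / s) ≤
      C * (τ * ∑ x ∈ A, ∑ y ∈ nbr x, g x ^ (τ - 1) * |g x - g y|) := by
  simp only [Real.rpow_mul (hg _)]
  exact (hiso.rpow_sum_rpow_le hs A (fun x => Real.rpow_nonneg (hg x) τ)
    fun x hx => by rw [hg0 x hx, Real.zero_rpow (by linarith)]).trans
      (mul_le_mul_of_nonneg_left (posVariation_rpow_le hg hτ) hC)

theorem rpow_le_of_rpow_add_le {X K a b : ℝ} (hX : 0 ≤ X) (hK : 0 ≤ K) (ha : a ≠ 0)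
    (h : X ^ (a + b) ≤ K * X ^ b) : X ^ a ≤ K := by
  rcases hX.eq_or_lt with rfl | hX
  · rwa [Real.zero_rpow ha]
  · rw [Real.rpow_add hX] at h
    exact le_of_mul_le_mul_right h (Real.rpow_pos_of_pos hX b)

theorem EdgeIsoperimetric.rpow_sum_rpow_le_mul_dirichlet {C s q ρ : ℝ}
    (hiso : EdgeIsoperimetric nbr (1 / s) C) (hω : IsConductance nbr ω) (hs : 1 ≤ s)
    (hC : 0 ≤ C) (hq : 1 < q) (hρ : 0 < ρ) (hρs : 1 / ρ = 2 / s - 1 + 1 / q) (A : Finset V)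
    {g : V → ℝ} (hg : ∀ x, 0 ≤ g x) (hg0 : ∀ x, x ∉ A → g x = 0) :
    (∑ x ∈ A, g x ^ (2 * ρ)) ^ (1 / ρ) ≤
      (C * (2 * ρ / s)) ^ 2 * (∑ x ∈ A, nu nbr ω x ^ q) ^ (1 / q) * dirichlet nbr ω A g := by
  have hq' : 0 < 1 - 1 / q := sub_pos.2 ((div_lt_one (by linarith)).2 hq)
  -- Apply the `ℓ¹` inequality to `g ^ τ`, where `τ s = 2 ρ` and `τ - 1 = ρ (1 - 1 / q)`.
  obtain ⟨τ, hτ⟩ : ∃ τ, τ = 2 * ρ / s := ⟨_, rfl⟩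
  have hτ1 : τ - 1 = ρ * (1 - 1 / q) := by
    have : τ = ρ * (1 / ρ + 1 - 1 / q) := by rw [hρs, hτ]; ring
    rw [this]; field_simp; ring
  have hτ' : 1 ≤ τ := by nlinarith
  have h_sobolev := hiso.rpow_sum_rpow_mul_le hs hC hτ' A hg hg0
  rw [hτ, div_mul_cancel₀ _ (by linarith : s ≠ 0), ← hτ] at h_sobolev
  have h_holder : ∑ x ∈ A, (g x ^ (τ - 1)) ^ 2 * nu nbr ω x ≤
      (∑ x ∈ A, g x ^ (2 * ρ)) ^ (1 - 1 / q) * (∑ x ∈ A, nu nbr ω x ^ q) ^ (1 / q) := by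
    convert sum_rpow_one_sub_inv_mul_le A hq (fun x _ => Real.rpow_nonneg (hg x) (2 * ρ))
      (fun x _ => hω.nu_nonneg x) using 3
    rw [← Real.rpow_mul_natCast (hg _), ← Real.rpow_mul (hg _), hτ1]
    congr 1; push_cast; ring
  have hE := hω.dirichlet_nonneg A g
  have hX : 0 ≤ ∑ x ∈ A, g x ^ (2 * ρ) := sum_nonneg fun x _ => Real.rpow_nonneg (hg x) _
  have hN : 0 ≤ (∑ x ∈ A, nu nbr ω x ^ q) ^ (1 / q) :=
    Real.rpow_nonneg (sum_nonneg fun x _ => Real.rpow_nonneg (hω.nu_nonneg x) _) _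
  refine rpow_le_of_rpow_add_le (b := 1 - 1 / q) hX (by positivity) (by positivity) ?_
  calc (∑ x ∈ A, g x ^ (2 * ρ)) ^ (1 / ρ + (1 - 1 / q))
      = ((∑ x ∈ A, g x ^ (2 * ρ)) ^ (1 / s)) ^ 2 := by
        rw [← Real.rpow_mul_natCast hX, hρs]
        congr 1; push_cast; ring
    _ ≤ (C * (τ * ∑ x ∈ A, ∑ y ∈ nbr x, g x ^ (τ - 1) * |g x - g y|)) ^ 2 := by gcongr
    _ = (C * τ) ^ 2 * (∑ x ∈ A, ∑ y ∈ nbr x, g x ^ (τ - 1) * |g x - g y|) ^ 2 := by ring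
    _ ≤ (C * τ) ^ 2 * ((∑ x ∈ A, (g x ^ (τ - 1)) ^ 2 * nu nbr ω x) * dirichlet nbr ω A g) := by
        gcongr
        exact hω.sq_sum_mul_abs_sub_le A _ g
    _ ≤ (C * τ) ^ 2 * ((∑ x ∈ A, g x ^ (2 * ρ)) ^ (1 - 1 / q) *
          (∑ x ∈ A, nu nbr ω x ^ q) ^ (1 / q) * dirichlet nbr ω A g) := by gcongr
    _ = _ := by rw [hτ]; ring

end Sobolev

section EnergyEstimate

variable {nbr : V → Finset V} {ω : V → V → ℝ} {A A' : Finset V} {η : V → ℝ} {L γ : ℝ}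

/-- The `γ`-mass `Σ_{x ∈ A} f(x)^γ μ^ω(x)` of `f` on `A`. -/
def mass (nbr : V → Finset V) (ω : V → V → ℝ) (γ : ℝ) (A : Finset V) (f : V → ℝ) : ℝ :=
  ∑ x ∈ A, f x ^ γ * mu nbr ω x

/-- The `γ`-mass of `f` on `A`, localised by the square of the cutoff function `η`. -/
def cutMass (nbr : V → Finset V) (ω : V → V → ℝ) (γ : ℝ) (A : Finset V) (η f : V → ℝ) : ℝ :=
  ∑ x ∈ A, η x ^ 2 * f x ^ γ * mu nbr ω x

/-- The Dirichlet energy of `f ^ (γ / 2)`, localised by the cutoff function `η`. -/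
def cutEnergy (nbr : V → Finset V) (ω : V → V → ℝ) (γ : ℝ) (A : Finset V) (η f : V → ℝ) : ℝ :=
  dirichlet nbr ω A fun x => η x * f x ^ (γ / 2)

/-- `η` is an `L`-Lipschitz cutoff function which equals `1` on `A'` and vanishes off `A`. -/
structure IsCutoff (nbr : V → Finset V) (η : V → ℝ) (A' A : Finset V) (L : ℝ) : Prop where
  nonneg : ∀ x, 0 ≤ η x
  le_one : ∀ x, η x ≤ 1
  eq_one : ∀ x ∈ A', η x = 1
  eq_zero : ∀ x, x ∉ A → η x = 0
  lipschitz : ∀ x, ∀ y ∈ nbr x, |η x - η y| ≤ L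

theorem IsConductance.lap_mul_mu (hω : IsConductance nbr ω) (f : V → ℝ) (x : V) :
    lap nbr ω f x * mu nbr ω x = ∑ y ∈ nbr x, ω x y * (f y - f x) := by
  rw [lap, mul_comm, mul_inv_cancel_left₀ (hω.mu_pos x).ne']

theorem IsConductance.sum_sum_mul_swap_le (hω : IsConductance nbr ω) {D : V → V → ℝ}
    (hD : ∀ x, x ∉ A → ∀ y, D x y = 0) (hD' : ∀ x, ∀ y ∈ nbr x, y ∉ A → 0 ≤ D x y) :
    ∑ x ∈ A, ∑ y ∈ nbr x, ω x y * D y x ≤ ∑ x ∈ A, ∑ y ∈ nbr x, ω x y * D x y := by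
  classical
  calc ∑ x ∈ A, ∑ y ∈ nbr x, ω x y * D y x
      = ∑ x ∈ A, ∑ y ∈ A, ω x y * D y x :=
        sum_congr rfl fun x _ => sum_congr_of_eq_on_inter
          (fun y _ hy => by rw [hD y hy, mul_zero])
          (fun y _ hy => by rw [hω.eq_zero x y hy, zero_mul]) fun _ _ _ => rfl
    _ = ∑ x ∈ A, ∑ y ∈ A, ω x y * D x y := by
        rw [sum_comm]
        simp only [fun x y => hω.symm y x]
    _ = ∑ x ∈ A, ∑ y ∈ nbr x with y ∈ A, ω x y * D x y :=
        sum_congr rfl fun x _ => (sum_subset (fun y hy => (mem_filter.1 hy).2) fun y hyA hy => by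
          rw [hω.eq_zero x y fun h => hy (mem_filter.2 ⟨h, hyA⟩), zero_mul]).symm
    _ ≤ ∑ x ∈ A, ∑ y ∈ nbr x, ω x y * D x y :=
        sum_le_sum fun x _ => sum_le_sum_of_subset_of_nonneg (filter_subset _ _) fun y hy hyA =>
          mul_nonneg (hω.nonneg x y) (hD' x y hy fun h => hyA (mem_filter.2 ⟨hy, h⟩))

theorem IsConductance.sum_sum_mul_le_two_mul (hω : IsConductance nbr ω) {F D : V → V → ℝ}
    (hF : ∀ x y, 0 ≤ F x y) (hD : ∀ x, x ∉ A → ∀ y, D x y = 0)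
    (hFD : ∀ x, ∀ y ∈ nbr x, F x y ≤ D x y + D y x) :
    ∑ x ∈ A, ∑ y ∈ nbr x, ω x y * F x y ≤ 2 * ∑ x ∈ A, ∑ y ∈ nbr x, ω x y * D x y := by
  have h_swap := hω.sum_sum_mul_swap_le hD fun x y hy hyA => by
    simpa [hD y hyA] using (hF x y).trans (hFD x y hy)
  calc ∑ x ∈ A, ∑ y ∈ nbr x, ω x y * F x y
      ≤ ∑ x ∈ A, ∑ y ∈ nbr x, (ω x y * D x y + ω x y * D y x) :=
        sum_le_sum fun x _ => sum_le_sum fun y hy => by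
          rw [← mul_add]; exact mul_le_mul_of_nonneg_left (hFD x y hy) (hω.nonneg x y)
    _ ≤ 2 * ∑ x ∈ A, ∑ y ∈ nbr x, ω x y * D x y := by
        simp only [sum_add_distrib]
        linarith

theorem cutEnergy_le_sum_mul_lap_add (hω : IsConductance nbr ω) (hη : IsCutoff nbr η A' A L)
    (hγ : 0 < γ) (hγ' : γ ≤ 1 / 2) {f : V → ℝ} (hf : ∀ x, 0 < f x) :
    cutEnergy nbr ω γ A η f ≤
      8 * ∑ x ∈ A, η x ^ 2 * (lap nbr ω f x * γ * f x ^ (γ - 1)) * mu nbr ω x +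
        84 * L ^ 2 * mass nbr ω γ A f := by
  set P : V → ℝ := fun x => if 0 < η x then f x ^ γ else 0
  have hP : ∀ x, 0 ≤ P x ∧ P x ≤ f x ^ γ := fun x => by
    have := Real.rpow_nonneg (hf x).le γ
    simp only [P]; split_ifs <;> simp [this]
  have hL : ∀ x, ∀ y ∈ nbr x, (η x - η y) ^ 2 ≤ L ^ 2 := fun x y hy =>
    sq_le_sq.2 ((hη.lipschitz x y hy).trans (le_abs_self L))
  set D : V → V → ℝ := fun x y =>
    4 * (γ * (η x ^ 2 * f x ^ (γ - 1)) * (f y - f x)) + 42 * L ^ 2 * P x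
  have hD : ∀ x, x ∉ A → ∀ y, D x y = 0 := fun x hx y => by simp [D, P, hη.eq_zero x hx]
  have h_edge : ∀ x, ∀ y ∈ nbr x,
      (η x * f x ^ (γ / 2) - η y * f y ^ (γ / 2)) ^ 2 ≤ D x y + D y x := by
    intro x y hy
    have h := sq_mul_rpow_half_sub_le hγ hγ' (hf x) (hf y) (hη.nonneg x) (hη.nonneg y)
    have := mul_le_mul_of_nonneg_right (hL x y hy) (add_nonneg (hP x).1 (hP y).1)
    simp only [P] at this
    simp only [D, P]
    linarith
  refine (hω.sum_sum_mul_le_two_mul (fun _ _ => sq_nonneg _) hD h_edge).trans ?_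
  rw [mass, mul_sum, mul_sum, mul_sum, ← sum_add_distrib]
  refine sum_le_sum fun x _ => ?_
  have h_row : ∑ y ∈ nbr x, ω x y * D x y = 4 * (γ * (η x ^ 2 * f x ^ (γ - 1))) *
      (lap nbr ω f x * mu nbr ω x) + 42 * L ^ 2 * (P x * mu nbr ω x) := by
    rw [hω.lap_mul_mu, mu, mul_sum, mul_sum, mul_sum, ← sum_add_distrib]
    exact sum_congr rfl fun y _ => by simp only [D]; ring
  have := mul_le_mul_of_nonneg_left
    (mul_le_mul_of_nonneg_right (hP x).2 (hω.mu_pos x).le) (by positivity : 0 ≤ 84 * L ^ 2)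
  rw [h_row]
  linarith

theorem mass_nonneg (hω : IsConductance nbr ω) {f : V → ℝ} (hf : ∀ x, 0 ≤ f x) :
    0 ≤ mass nbr ω γ A f :=
  sum_nonneg fun x _ => mul_nonneg (Real.rpow_nonneg (hf x) γ) (hω.mu_pos x).le

theorem cutMass_nonneg (hω : IsConductance nbr ω) {f : V → ℝ} (hf : ∀ x, 0 ≤ f x) :
    0 ≤ cutMass nbr ω γ A η f :=
  sum_nonneg fun x _ =>
    mul_nonneg (mul_nonneg (sq_nonneg _) (Real.rpow_nonneg (hf x) γ)) (hω.mu_pos x).le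

theorem cutMass_le_mass (hω : IsConductance nbr ω) (hη : IsCutoff nbr η A' A L) {f : V → ℝ}
    (hf : ∀ x, 0 ≤ f x) : cutMass nbr ω γ A η f ≤ mass nbr ω γ A f :=
  sum_le_sum fun x _ => mul_le_mul_of_nonneg_right
    (mul_le_of_le_one_left (Real.rpow_nonneg (hf x) γ)
      (pow_le_one₀ (hη.nonneg x) (hη.le_one x))) (hω.mu_pos x).le

/-- `u` is everywhere positive at times in `I` and super-caloric on `I × B`. -/
structure IsPosSuperCaloric (nbr : V → Finset V) (ω : V → V → ℝ) (I : Set ℝ) (B : Finset V)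
    (u : ℝ → V → ℝ) : Prop where
  superCaloric : SuperCaloric nbr ω I (B : Set V) u
  pos : ∀ t ∈ I, ∀ x, 0 < u t x

namespace IsPosSuperCaloric

variable {I J : Set ℝ} {B : Finset V} {u : ℝ → V → ℝ}

theorem mono (hu : IsPosSuperCaloric nbr ω I B u) (hJ : J ⊆ I) (hA : A ⊆ B) :
    IsPosSuperCaloric nbr ω J A u where
  superCaloric x hx t ht := hu.superCaloric x (hA hx) t (hJ ht)
  pos t ht := hu.pos t (hJ ht)

theorem continuousOn_rpow (hu : IsPosSuperCaloric nbr ω I B u) (γ : ℝ) {x : V} (hx : x ∈ B) :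
    ContinuousOn (fun t => u t x ^ γ) I := fun t ht => by
  obtain ⟨_, hd, _⟩ := hu.superCaloric x hx t ht
  exact (hd.continuousAt.rpow_const (Or.inl (hu.pos t ht x).ne')).continuousWithinAt

theorem continuousOn_mass (hu : IsPosSuperCaloric nbr ω I A u) (γ : ℝ) :
    ContinuousOn (fun t => mass nbr ω γ A (u t)) I :=
  continuousOn_finsetSum _ fun _ hx => (hu.continuousOn_rpow γ hx).mul continuousOn_const

theorem continuousOn_cutEnergy (hu : IsPosSuperCaloric nbr ω I A u)
    (hη : IsCutoff nbr η A' A L) (γ : ℝ) :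
    ContinuousOn (fun t => cutEnergy nbr ω γ A η (u t)) I := by
  have h_cut : ∀ x, ContinuousOn (fun t => η x * u t x ^ (γ / 2)) I := fun x => by
    by_cases hx : x ∈ A
    · exact continuousOn_const.mul (hu.continuousOn_rpow _ hx)
    · simp only [hη.eq_zero x hx, zero_mul]
      exact continuousOn_const
  exact continuousOn_finsetSum _ fun x _ => continuousOn_finsetSum _ fun y _ =>
    continuousOn_const.mul (((h_cut x).sub (h_cut y)).pow 2)

theorem hasDerivAt_cutMass (hu : IsPosSuperCaloric nbr ω I A u) (η : V → ℝ) (γ : ℝ) {t : ℝ}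
    (ht : t ∈ I) : HasDerivAt (fun s => cutMass nbr ω γ A η (u s)) (∑ x ∈ A, η x ^ 2 *
      (deriv (fun s => u s x) t * γ * u t x ^ (γ - 1)) * mu nbr ω x) t := by
  refine HasDerivAt.fun_sum fun x hx => ?_
  obtain ⟨e, he, _⟩ := hu.superCaloric x hx t ht
  rw [he.deriv]
  exact ((he.rpow_const (Or.inl (hu.pos t ht x).ne')).const_mul _).mul_const _

theorem cutEnergy_le_deriv_cutMass_add (hu : IsPosSuperCaloric nbr ω I A u)
    (hω : IsConductance nbr ω) (hη : IsCutoff nbr η A' A L) (hγ : 0 < γ) (hγ' : γ ≤ 1 / 2)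
    {t : ℝ} (ht : t ∈ I) : cutEnergy nbr ω γ A η (u t) ≤
      8 * deriv (fun s => cutMass nbr ω γ A η (u s)) t + 84 * L ^ 2 * mass nbr ω γ A (u t) := by
  refine (cutEnergy_le_sum_mul_lap_add hω hη hγ hγ' (hu.pos t ht)).trans ?_
  rw [(hu.hasDerivAt_cutMass η γ ht).deriv]
  gcongr with x hx
  · exact (hω.mu_pos x).le
  · exact Real.rpow_nonneg (hu.pos t ht x).le _
  · obtain ⟨e, he, hle⟩ := hu.superCaloric x hx t ht
    rwa [he.deriv]

end IsPosSuperCaloric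

theorem mul_add_integral_sub_mul_le {F E M : ℝ → ℝ} {c K t T : ℝ} (htT : t ≤ T) (hK : 0 ≤ K)
    (hF : ∀ s ∈ Set.Icc t T, DifferentiableAt ℝ F s) (hE : ContinuousOn E (Set.Icc t T))
    (hM : ContinuousOn M (Set.Icc t T)) (hM0 : ∀ s ∈ Set.Icc t T, 0 ≤ M s)
    (hFM : ∀ s ∈ Set.Icc t T, F s ≤ c * M s)
    (hEF : ∀ s ∈ Set.Icc t T, E s ≤ deriv F s + K * M s) :
    (T - t) * F t + ∫ s in t..T, (T - s) * E s ≤ (c + K * (T - t)) * ∫ s in t..T, M s := by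
  have h_deriv : ∀ s ∈ Set.Icc t T,
      HasDerivAt (fun s => (T - s) * F s) (-1 * F s + (T - s) * deriv F s) s := fun s hs =>
    ((hasDerivAt_id s).const_sub T).mul (hF s hs).hasDerivAt
  have hTE : ContinuousOn (fun s => (T - s) * E s) (Set.Icc t T) :=
    (continuousOn_const.sub continuousOn_id).mul hE
  have hKM : ContinuousOn (fun s => (c + K * (T - t)) * M s) (Set.Icc t T) :=
    continuousOn_const.mul hM
  have h_le : ∀ s ∈ Set.Icc t T, (T - s) * E s - (c + K * (T - t)) * M s ≤
      -1 * F s + (T - s) * deriv F s := by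
    intro s hs
    have := mul_le_mul_of_nonneg_left (hEF s hs) (sub_nonneg.2 hs.2)
    have := mul_le_mul_of_nonneg_right (sub_le_sub_left hs.1 T) (mul_nonneg hK (hM0 s hs))
    linarith [hFM s hs]
  have h_ftc := intervalIntegral.integral_le_sub_of_hasDeriv_right_of_le htT
    (fun s hs => (h_deriv s hs).continuousAt.continuousWithinAt)
    (fun s hs => (h_deriv s (Set.Ioo_subset_Icc_self hs)).hasDerivWithinAt)
    (hTE.fun_sub hKM).integrableOn_Icc fun s hs => h_le s (Set.Ioo_subset_Icc_self hs)
  rw [intervalIntegral.integral_sub (hTE.intervalIntegrable_of_Icc htT)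
    (hKM.intervalIntegrable_of_Icc htT), intervalIntegral.integral_const_mul] at h_ftc
  linarith

theorem IsPosSuperCaloric.energy_estimate {u : ℝ → V → ℝ} {t T : ℝ}
    (hu : IsPosSuperCaloric nbr ω (Set.Icc t T) A u) (hω : IsConductance nbr ω)
    (hη : IsCutoff nbr η A' A L) (hγ : 0 < γ) (hγ' : γ ≤ 1 / 2) (htT : t ≤ T) :
    (T - t) * (8 * cutMass nbr ω γ A η (u t)) +
        ∫ s in t..T, (T - s) * cutEnergy nbr ω γ A η (u s) ≤
      (8 + 84 * L ^ 2 * (T - t)) * ∫ s in t..T, mass nbr ω γ A (u s) := by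
  have hu0 := fun s hs x => (hu.pos s hs x).le
  have h_deriv := fun s (hs : s ∈ Set.Icc t T) => (hu.hasDerivAt_cutMass η γ hs).const_mul 8
  refine mul_add_integral_sub_mul_le htT (by positivity)
    (fun s hs => (h_deriv s hs).differentiableAt) (hu.continuousOn_cutEnergy hη γ)
    (hu.continuousOn_mass γ) (fun s hs => mass_nonneg hω (hu0 s hs))
    (fun s hs => by gcongr; exact cutMass_le_mass hω hη (hu0 s hs)) fun s hs => ?_
  rw [(h_deriv s hs).deriv, ← (hu.hasDerivAt_cutMass η γ hs).deriv]
  exact hu.cutEnergy_le_deriv_cutMass_add hω hη hγ hγ' hs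

end EnergyEstimate

section Interpolation

variable {nbr : V → Finset V} {ω : V → V → ℝ} {A A' : Finset V} {η : V → ℝ} {L γ : ℝ}

theorem sum_rpow_mul_le_interpolation {ι : Type*} (s : Finset ι) {w m : ι → ℝ} {p l ρ : ℝ}
    (hp : 0 < p) (hl : 0 < l) (hl' : l < 1) (hρ : 0 < ρ) (hρl : 1 / ρ = l * (1 - 1 / p))
    (hw : ∀ i ∈ s, 0 ≤ w i) (hm : ∀ i ∈ s, 0 < m i) :
    ∑ i ∈ s, w i ^ (2 - l) * m i ≤
      (∑ i ∈ s, w i * m i) ^ (1 - l) *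
        ((∑ i ∈ s, w i ^ ρ) ^ (1 / ρ) * (∑ i ∈ s, m i ^ p) ^ (l / p)) := by
  have h_holder := sum_rpow_mul_rpow_mul_rpow_le s (f := fun i => w i * m i)
    (g := fun i => w i ^ ρ) (h := fun i => m i ^ p) (θ₁ := 1 - l) (θ₂ := 1 / ρ) (θ₃ := l / p)
    (by linarith) (by positivity) (by positivity) (by rw [hρl]; ring)
    (fun i hi => mul_nonneg (hw i hi) (hm i hi).le) (fun i hi => Real.rpow_nonneg (hw i hi) _)
    (fun i hi => Real.rpow_nonneg (hm i hi).le _)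
  refine (sum_congr rfl fun i hi => ?_).trans_le h_holder
  have hwi := hw i hi
  have hmi := hm i hi
  have h_w : w i ^ (2 - l) = w i ^ (1 - l) * w i := by
    rw [← Real.rpow_add_one' hwi (by linarith)]
    congr 1
    ring
  have h_m : m i = m i ^ (1 - l) * m i ^ l := by
    rw [← Real.rpow_add hmi, sub_add_cancel, Real.rpow_one]
  rw [← Real.rpow_mul hwi, mul_one_div_cancel hρ.ne', Real.rpow_one, ← Real.rpow_mul hmi.le,
    mul_div_cancel₀ _ hp.ne', Real.mul_rpow hwi hmi.le, h_w]
  nth_rw 1 [h_m]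
  ring

/-- Exponents of the iteration: the isoperimetric exponent `1 / s`, the integrability exponents
`p` of `μ^ω` and `q` of `ν^ω`, the resulting Sobolev exponent `ρ`, and `l`, for which `2 - l` is
the factor by which one step of the iteration raises the power of the function. -/
structure MoserExponents (s p q ρ l : ℝ) : Prop where
  one_le_s : 1 ≤ s
  one_lt_p : 1 < p
  one_lt_q : 1 < q
  ρ_pos : 0 < ρ
  l_pos : 0 < l
  l_lt_one : l < 1
  one_div_ρ : 1 / ρ = l * (1 - 1 / p)
  one_div_ρ_eq_sobolev : 1 / ρ = 2 / s - 1 + 1 / q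

/-- The constant in the interpolation between the mass and the Dirichlet energy of a function
supported in `A`; `C` is the isoperimetric constant. -/
def interpolationConst (nbr : V → Finset V) (ω : V → V → ℝ) (s p q ρ l C : ℝ) (A : Finset V) : ℝ :=
  (C * (2 * ρ / s)) ^ 2 * (∑ x ∈ A, nu nbr ω x ^ q) ^ (1 / q) *
    (∑ x ∈ A, mu nbr ω x ^ p) ^ (l / p)

theorem interpolationConst_nonneg (hω : IsConductance nbr ω) (s p q ρ l C : ℝ) (A : Finset V) :
    0 ≤ interpolationConst nbr ω s p q ρ l C A :=
  mul_nonneg (mul_nonneg (sq_nonneg _) (Real.rpow_nonneg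
    (sum_nonneg fun x _ => Real.rpow_nonneg (hω.nu_nonneg x) _) _))
    (Real.rpow_nonneg (sum_nonneg fun x _ => Real.rpow_nonneg (hω.mu_pos x).le _) _)

variable {s p q ρ l C : ℝ}

theorem mass_le_cutMass_mul_cutEnergy (hω : IsConductance nbr ω) (h : MoserExponents s p q ρ l)
    (hiso : EdgeIsoperimetric nbr (1 / s) C) (hC : 0 ≤ C) (hη : IsCutoff nbr η A' A L)
    (hA : A' ⊆ A) (γ : ℝ) {f : V → ℝ} (hf : ∀ x, 0 ≤ f x) :
    mass nbr ω ((2 - l) * γ) A' f ≤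
      cutMass nbr ω γ A η f ^ (1 - l) * interpolationConst nbr ω s p q ρ l C A *
        cutEnergy nbr ω γ A η f := by
  set w : V → ℝ := fun x => η x ^ 2 * f x ^ γ
  set g : V → ℝ := fun x => η x * f x ^ (γ / 2)
  have hw : ∀ x, 0 ≤ w x := fun x => mul_nonneg (sq_nonneg _) (Real.rpow_nonneg (hf x) _)
  have hg : ∀ x, 0 ≤ g x := fun x => mul_nonneg (hη.nonneg x) (Real.rpow_nonneg (hf x) _)
  have hgw : ∀ x, g x ^ (2 * ρ) = w x ^ ρ := fun x => by
    rw [Real.rpow_mul (hg x), Real.rpow_two, mul_pow, sq_rpow_half (hf x)]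
  have h_mass : mass nbr ω ((2 - l) * γ) A' f ≤ ∑ x ∈ A, w x ^ (2 - l) * mu nbr ω x := by
    refine (sum_congr rfl fun x hx => ?_).trans_le
      (sum_le_sum_of_subset_of_nonneg hA fun x _ _ =>
        mul_nonneg (Real.rpow_nonneg (hw x) _) (hω.mu_pos x).le)
    simp only [w, hη.eq_one x hx, one_pow, one_mul]
    rw [← Real.rpow_mul (hf x), mul_comm γ]
  have h_interp := sum_rpow_mul_le_interpolation A (zero_lt_one.trans h.one_lt_p) h.l_pos
    h.l_lt_one h.ρ_pos h.one_div_ρ (fun x _ => hw x) (fun x _ => hω.mu_pos x)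
  have h_sobolev := hiso.rpow_sum_rpow_le_mul_dirichlet hω h.one_le_s hC h.one_lt_q h.ρ_pos
    h.one_div_ρ_eq_sobolev A hg fun x hx => by simp [g, hη.eq_zero x hx]
  simp only [hgw] at h_sobolev
  calc mass nbr ω ((2 - l) * γ) A' f
      ≤ cutMass nbr ω γ A η f ^ (1 - l) *
          ((∑ x ∈ A, w x ^ ρ) ^ (1 / ρ) * (∑ x ∈ A, mu nbr ω x ^ p) ^ (l / p)) :=
        h_mass.trans h_interp
    _ ≤ cutMass nbr ω γ A η f ^ (1 - l) *
          ((C * (2 * ρ / s)) ^ 2 * (∑ x ∈ A, nu nbr ω x ^ q) ^ (1 / q) * dirichlet nbr ω A g *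
            (∑ x ∈ A, mu nbr ω x ^ p) ^ (l / p)) := by
        gcongr
        · exact Real.rpow_nonneg (cutMass_nonneg hω hf) _
        · exact Real.rpow_nonneg
            (sum_nonneg fun x _ => Real.rpow_nonneg (hω.mu_pos x).le _) _
    _ = _ := by
        rw [interpolationConst, cutEnergy]
        ring

namespace IsPosSuperCaloric

variable {u : ℝ → V → ℝ} {a a' b' t T : ℝ}

theorem energy_estimate_le (hu : IsPosSuperCaloric nbr ω (Set.Icc a T) A u)
    (hω : IsConductance nbr ω) (hη : IsCutoff nbr η A' A L) (hγ : 0 < γ) (hγ' : γ ≤ 1 / 2)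
    (ht : t ∈ Set.Icc a T) :
    (T - t) * (8 * cutMass nbr ω γ A η (u t)) +
        ∫ s in t..T, (T - s) * cutEnergy nbr ω γ A η (u s) ≤
      (8 + 84 * L ^ 2 * (T - a)) * ∫ s in a..T, mass nbr ω γ A (u s) := by
  have h_mass : ∀ s ∈ Set.Icc a T, 0 ≤ mass nbr ω γ A (u s) := fun s hs =>
    mass_nonneg hω fun x => (hu.pos s hs x).le
  have h_int : ∫ s in t..T, mass nbr ω γ A (u s) ≤ ∫ s in a..T, mass nbr ω γ A (u s) :=
    intervalIntegral.integral_mono_interval ht.1 ht.2 le_rfl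
      ((ae_restrict_mem measurableSet_Ioc).mono fun s hs =>
        h_mass s (Set.Ioc_subset_Icc_self hs))
      ((hu.continuousOn_mass γ).intervalIntegrable_of_Icc (ht.1.trans ht.2))
  refine ((hu.mono (Set.Icc_subset_Icc_left ht.1) subset_rfl).energy_estimate hω hη hγ hγ'
    ht.2).trans (mul_le_mul ?_ h_int ?_ ?_)
  · gcongr
    exact ht.1
  · exact intervalIntegral.integral_nonneg ht.2 fun s hs => h_mass s ⟨ht.1.trans hs.1, hs.2⟩
  · have := sub_nonneg.2 (ht.1.trans ht.2)
    positivity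

theorem cutMass_le (hu : IsPosSuperCaloric nbr ω (Set.Icc a T) A u)
    (hω : IsConductance nbr ω) (hη : IsCutoff nbr η A' A L) (hγ : 0 < γ) (hγ' : γ ≤ 1 / 2)
    (ht : t ∈ Set.Icc a b') (hbT : b' < T) :
    cutMass nbr ω γ A η (u t) ≤
      (8 + 84 * L ^ 2 * (T - a)) / (T - b') * ∫ s in a..T, mass nbr ω γ A (u s) := by
  have htT : t ∈ Set.Icc a T := ⟨ht.1, ht.2.trans hbT.le⟩
  have h_energy := hu.energy_estimate_le hω hη hγ hγ' htT
  have h_int : 0 ≤ ∫ s in t..T, (T - s) * cutEnergy nbr ω γ A η (u s) :=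
    intervalIntegral.integral_nonneg htT.2 fun s hs =>
      mul_nonneg (sub_nonneg.2 hs.2) (hω.dirichlet_nonneg A _)
  have h_cut : 0 ≤ cutMass nbr ω γ A η (u t) := cutMass_nonneg hω fun x => (hu.pos t htT x).le
  rw [div_mul_eq_mul_div, le_div_iff₀ (sub_pos.2 hbT)]
  nlinarith [mul_le_mul_of_nonneg_right (sub_le_sub_left ht.2 T) h_cut, sub_pos.2 hbT]

theorem integral_cutEnergy_le (hu : IsPosSuperCaloric nbr ω (Set.Icc a T) A u)
    (hω : IsConductance nbr ω) (hη : IsCutoff nbr η A' A L) (hγ : 0 < γ) (hγ' : γ ≤ 1 / 2)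
    (haa' : a ≤ a') (hab' : a' ≤ b') (hbT : b' < T) :
    ∫ t in a'..b', cutEnergy nbr ω γ A η (u t) ≤
      (8 + 84 * L ^ 2 * (T - a)) / (T - b') * ∫ s in a..T, mass nbr ω γ A (u s) := by
  have ha'T : a' ∈ Set.Icc a T := ⟨haa', hab'.trans hbT.le⟩
  have h_energy := hu.energy_estimate_le hω hη hγ hγ' ha'T
  have h_cut : 0 ≤ (T - a') * (8 * cutMass nbr ω γ A η (u a')) :=
    mul_nonneg (sub_nonneg.2 ha'T.2)
      (mul_nonneg (by norm_num) (cutMass_nonneg hω fun x => (hu.pos a' ha'T x).le))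
  have hE := hu.continuousOn_cutEnergy hη γ
  have hTE : ContinuousOn (fun s => (T - s) * cutEnergy nbr ω γ A η (u s)) (Set.Icc a T) :=
    (continuousOn_const.sub continuousOn_id).mul hE
  have h_sub : Set.Icc a' b' ⊆ Set.Icc a T := Set.Icc_subset_Icc haa' hbT.le
  rw [div_mul_eq_mul_div, le_div_iff₀' (sub_pos.2 hbT), ← intervalIntegral.integral_const_mul]
  calc ∫ t in a'..b', (T - b') * cutEnergy nbr ω γ A η (u t)
      ≤ ∫ t in a'..b', (T - t) * cutEnergy nbr ω γ A η (u t) :=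
        intervalIntegral.integral_mono_on hab'
          ((continuousOn_const.mul (hE.mono h_sub)).intervalIntegrable_of_Icc hab')
          ((hTE.mono h_sub).intervalIntegrable_of_Icc hab') fun t ht =>
            mul_le_mul_of_nonneg_right (sub_le_sub_left ht.2 T) (hω.dirichlet_nonneg A _)
    _ ≤ ∫ t in a'..T, (T - t) * cutEnergy nbr ω γ A η (u t) :=
        intervalIntegral.integral_mono_interval le_rfl hab' hbT.le
          ((ae_restrict_mem measurableSet_Ioc).mono fun s hs =>
            mul_nonneg (sub_nonneg.2 hs.2) (hω.dirichlet_nonneg A _))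
          ((hTE.mono (Set.Icc_subset_Icc_left haa')).intervalIntegrable_of_Icc ha'T.2)
    _ ≤ _ := by linarith

theorem integral_mass_le (hu : IsPosSuperCaloric nbr ω (Set.Icc a T) A u)
    (hω : IsConductance nbr ω) (h : MoserExponents s p q ρ l)
    (hiso : EdgeIsoperimetric nbr (1 / s) C) (hC : 0 ≤ C) (hη : IsCutoff nbr η A' A L)
    (hA : A' ⊆ A) (hγ : 0 < γ) (hγ' : γ ≤ 1 / 2) (haa' : a ≤ a') (hab' : a' ≤ b') (hbT : b' < T) :
    ∫ t in a'..b', mass nbr ω ((2 - l) * γ) A' (u t) ≤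
      ((8 + 84 * L ^ 2 * (T - a)) / (T - b') * ∫ t in a..T, mass nbr ω γ A (u t)) ^ (2 - l) *
        interpolationConst nbr ω s p q ρ l C A := by
  set H := interpolationConst nbr ω s p q ρ l C A
  set X := (8 + 84 * L ^ 2 * (T - a)) / (T - b') * ∫ t in a..T, mass nbr ω γ A (u t)
  have hH : 0 ≤ H := interpolationConst_nonneg hω ..
  have h_sub : Set.Icc a' b' ⊆ Set.Icc a T := Set.Icc_subset_Icc haa' hbT.le
  have hu₀ : ∀ t ∈ Set.Icc a' b', ∀ x, 0 ≤ u t x := fun t ht x => (hu.pos t (h_sub ht) x).le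
  have h_cut : ∀ t ∈ Set.Icc a' b', cutMass nbr ω γ A η (u t) ≤ X := fun t ht =>
    hu.cutMass_le hω hη hγ hγ' ⟨haa'.trans ht.1, ht.2⟩ hbT
  have ha' : a' ∈ Set.Icc a' b' := Set.left_mem_Icc.2 hab'
  have hX : 0 ≤ X := (cutMass_nonneg hω (hu₀ a' ha')).trans (h_cut a' ha')
  calc ∫ t in a'..b', mass nbr ω ((2 - l) * γ) A' (u t)
      ≤ ∫ t in a'..b', X ^ (1 - l) * H * cutEnergy nbr ω γ A η (u t) := by
        refine intervalIntegral.integral_mono_on hab'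
          (((hu.mono h_sub hA).continuousOn_mass _).intervalIntegrable_of_Icc hab')
          ((continuousOn_const.mul
            ((hu.continuousOn_cutEnergy hη γ).mono h_sub)).intervalIntegrable_of_Icc hab')
          fun t ht => ?_
        refine (mass_le_cutMass_mul_cutEnergy hω h hiso hC hη hA γ (hu₀ t ht)).trans ?_
        gcongr
        · exact hω.dirichlet_nonneg A _
        · exact cutMass_nonneg hω (hu₀ t ht)
        · linarith [h.l_lt_one]
        · exact h_cut t ht
    _ = X ^ (1 - l) * H * ∫ t in a'..b', cutEnergy nbr ω γ A η (u t) :=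
        intervalIntegral.integral_const_mul _ _
    _ ≤ X ^ (1 - l) * H * X := by
        gcongr
        exact hu.integral_cutEnergy_le hω hη hγ hγ' haa' hab' hbT
    _ = X ^ (2 - l) * H := by
        rw [mul_right_comm, ← Real.rpow_add_one' hX (by linarith [h.l_lt_one])]
        congr 2
        ring

end IsPosSuperCaloric

end Interpolation

section Iteration

/-- A step of gain `Z / δ ^ 2` over the fraction `1 - θ` of a gap `δ`, followed by a bound with
exponent `c` over the remaining fraction `θ`, is absorbed in a bound with exponent `c` over the
whole gap. The threshold `4` is the least value of `Q / δ ^ 2` for `Q ≥ 1` and `δ ≤ 1 / 2`. -/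
structure IsAbsorbing (a θ c : ℝ) : Prop where
  θ_pos : 0 < θ
  θ_lt_one : θ < 1
  c_pos : 0 < c
  mul_le : ∀ Z : ℝ, 4 ≤ Z → (Z / θ ^ 2) ^ c * ((Z / (1 - θ) ^ 2) ^ 2) ^ a ≤ (Z ^ c) ^ a

/- Take `θ` so close to `1` that `Z / θ ^ 2 ≤ Z ^ (1 + τ)` with `1 + τ < a`; since `Z ≥ 4`, the
factor `(1 - θ) ^ (-2)` is also bounded by a power of `Z`, which a large `c` absorbs. -/
theorem exists_isAbsorbing {a : ℝ} (ha : 1 < a) : ∃ θ c : ℝ, IsAbsorbing a θ c := by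
  have ha₁ : 0 < a - 1 := sub_pos.2 ha
  set τ := (a - 1) / 2 with hτ
  have hτ₀ : 0 < τ := by positivity
  set θ : ℝ := 2 ^ (-τ) with hθ
  have hθ₀ : 0 < θ := by positivity
  obtain ⟨m, hm⟩ := pow_unbounded_of_one_lt (((1 - θ) ^ 2)⁻¹) (by norm_num : (1 : ℝ) < 4)
  set c : ℝ := 4 * (1 + m) * a / (a - 1) with hc
  have hc₀ : 0 < c := by positivity
  refine ⟨θ, c, hθ₀, Real.rpow_lt_one_of_one_lt_of_neg one_lt_two (neg_neg_of_pos hτ₀), hc₀,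
    fun Z hZ => ?_⟩
  have hZ₀ : 0 < Z := by linarith
  have h_inner : Z / θ ^ 2 ≤ Z ^ (1 + τ) := by
    have hθ2 : (θ ^ 2)⁻¹ = 4 ^ τ := by
      rw [hθ, Real.rpow_neg two_pos.le, inv_pow, inv_inv, ← Real.rpow_mul_natCast two_pos.le,
        mul_comm, Real.rpow_natCast_mul two_pos.le]
      norm_num
    rw [div_eq_mul_inv, hθ2, Real.rpow_add hZ₀, Real.rpow_one]
    gcongr
  have h_outer : (Z / (1 - θ) ^ 2) ^ 2 ≤ Z ^ (2 * (1 + m : ℝ)) := by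
    rw [mul_comm, Real.rpow_mul hZ₀.le, Real.rpow_two, Real.rpow_add hZ₀, Real.rpow_one,
      Real.rpow_natCast, div_eq_mul_inv]
    gcongr
    exact hm.le.trans (pow_le_pow_left₀ (by norm_num) hZ m)
  calc (Z / θ ^ 2) ^ c * ((Z / (1 - θ) ^ 2) ^ 2) ^ a
      ≤ (Z ^ (1 + τ)) ^ c * (Z ^ (2 * (1 + m : ℝ))) ^ a := by gcongr
    _ = Z ^ ((1 + τ) * c + 2 * (1 + m) * a) := by
        rw [← Real.rpow_mul hZ₀.le, ← Real.rpow_mul hZ₀.le, ← Real.rpow_add hZ₀]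
    _ = (Z ^ c) ^ a := by
        rw [← Real.rpow_mul hZ₀.le]
        congr 1
        rw [hc, hτ]
        field_simp
        ring

theorem mul_le_mul_rpow_of_le_mul_rpow {Y Y' Z a x y : ℝ} (hY : 0 ≤ Y) (hY' : 0 ≤ Y') (hZ : 0 ≤ Z)
    (hx : 0 ≤ x) (hxy : y ≤ (Y' * x) ^ a) (h_absorb : Y * Y' ^ a ≤ Z ^ a) :
    Y * y ≤ (Z * x) ^ a :=
  calc Y * y ≤ Y * (Y' * x) ^ a := by gcongr
    _ = Y * Y' ^ a * x ^ a := by rw [Real.mul_rpow hY' hx, mul_assoc]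
    _ ≤ Z ^ a * x ^ a := by gcongr
    _ = (Z * x) ^ a := (Real.mul_rpow hZ hx).symm

theorem le_rpow_pow_of_step {a θ c Q : ℝ} {Φ : ℝ → ℝ → ℝ} (ha : 1 < a) (h : IsAbsorbing a θ c)
    (hQ : 1 ≤ Q) (h_nonneg : ∀ γ σ, 1 / 2 ≤ σ → σ ≤ 1 → 0 ≤ Φ γ σ)
    (h_mono : ∀ γ σ' σ, 1 / 2 ≤ σ' → σ' < σ → σ ≤ 1 → Φ γ σ' ≤ Φ γ σ)
    (h_step : ∀ γ σ' σ, 0 < γ → γ ≤ 1 / 2 → 1 / 2 ≤ σ' → σ' < σ → σ ≤ 1 →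
      Φ (a * γ) σ' ≤ ((Q / (σ - σ') ^ 2) ^ 2 * Φ γ σ) ^ a)
    (k : ℕ) {γ σ' σ : ℝ} (hγ : 0 < γ) (hγk : a ^ k * γ ≤ 1 / 2) (hσ' : 1 / 2 ≤ σ')
    (hσσ : σ' < σ) (hσ : σ ≤ 1) :
    Φ (a ^ k * γ) σ' ≤ ((Q / (σ - σ') ^ 2) ^ c * Φ γ σ) ^ (a ^ k) := by
  induction k generalizing γ σ' σ with
  | zero =>
    have h_one : 1 ≤ Q / (σ - σ') ^ 2 := by
      rw [one_le_div (pow_pos (sub_pos.2 hσσ) 2)]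
      nlinarith
    simp only [pow_zero, one_mul, Real.rpow_one]
    exact (h_mono γ σ' σ hσ' hσσ hσ).trans (le_mul_of_one_le_left
      (h_nonneg γ σ (by linarith) hσ) (Real.one_le_rpow h_one h.c_pos.le))
  | succ k ih =>
    set Z := Q / (σ - σ') ^ 2 with hZ
    have hδ : 0 < σ - σ' := sub_pos.2 hσσ
    have hZ4 : 4 ≤ Z := by
      rw [hZ, le_div_iff₀ (pow_pos hδ 2)]
      nlinarith
    set σ₁ := σ' + θ * (σ - σ') with hσ₁
    have h_lt : σ' < σ₁ := lt_add_of_pos_right _ (mul_pos h.θ_pos hδ)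
    have h_lt' : σ₁ < σ := by nlinarith [h.θ_lt_one]
    have hk : a ^ (k + 1) * γ = a ^ k * (a * γ) := by ring
    have h_inner := ih (by positivity) (hk ▸ hγk) hσ' h_lt (h_lt'.le.trans hσ)
    have h_outer := h_step γ σ₁ σ hγ (by nlinarith [one_le_pow₀ ha.le (n := k + 1)])
      (hσ'.trans h_lt.le) h_lt' hσ
    have e_inner : Q / (σ₁ - σ') ^ 2 = Z / θ ^ 2 := by
      rw [hσ₁, hZ, add_sub_cancel_left, mul_pow, div_div, mul_comm (θ ^ 2)]
    have e_outer : Q / (σ - σ₁) ^ 2 = Z / (1 - θ) ^ 2 := by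
      rw [show σ - σ₁ = (1 - θ) * (σ - σ') by rw [hσ₁]; ring, hZ, mul_pow, div_div,
        mul_comm ((1 - θ) ^ 2)]
    rw [e_inner] at h_inner
    rw [e_outer] at h_outer
    rw [hk, pow_succ', Real.rpow_mul (mul_nonneg (by positivity) (h_nonneg γ σ (by linarith) hσ))]
    refine h_inner.trans (Real.rpow_le_rpow (mul_nonneg (by positivity)
      (h_nonneg _ _ (by linarith) (by linarith))) ?_ (by positivity))
    exact mul_le_mul_rpow_of_le_mul_rpow (by positivity) (by positivity) (by positivity)
      (h_nonneg γ σ (by linarith) hσ) h_outer (h.mul_le Z hZ4)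

theorem exists_pow_mul_eq_near {a α β : ℝ} (ha : 1 < a) (hα : 0 < α) (hαβ : α ≤ β) :
    ∃ (k : ℕ) (γ : ℝ), 0 < γ ∧ γ ≤ α ∧ 1 / γ ≤ a / α ∧ a ^ k * γ = β := by
  obtain ⟨m, hm, hm'⟩ := exists_nat_pow_near ((one_le_div hα).2 hαβ) ha
  have hβ : 0 < β := hα.trans_le hαβ
  rw [le_div_iff₀ hα] at hm
  rw [div_lt_iff₀ hα] at hm'
  refine ⟨m + 1, β / a ^ (m + 1), by positivity, ?_, ?_, mul_div_cancel₀ _ (by positivity)⟩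
  · rw [div_le_iff₀' (by positivity)]
    exact hm'.le
  · rw [one_div_div, div_le_div_iff₀ hβ hα, pow_succ]
    nlinarith

theorem one_div_add_div_le {a c α β γ : ℝ} (ha : 0 ≤ a) (hc : 0 ≤ c) (hα : 0 < α)
    (hαβ : α < β / 2) (hγ : 1 / γ ≤ a / α) :
    1 / β + c / γ ≤ (2 * a * c + 1) * (1 / α - 1 / β) := by
  have hβ : 1 / β ≤ 1 / α / 2 := by
    rw [div_div]
    exact one_div_le_one_div_of_le (by positivity) (by linarith)
  have hcγ : c / γ ≤ c * (a * (2 * (1 / α - 1 / β))) := by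
    rw [div_eq_mul_one_div]
    refine mul_le_mul_of_nonneg_left (hγ.trans ?_) hc
    rw [div_eq_mul_one_div]
    exact mul_le_mul_of_nonneg_left (by linarith) ha
  linarith

theorem rpow_one_div_le_of_le_rpow_pow {Z X P F a c α β γ : ℝ} {k : ℕ} (hZ : 1 ≤ Z)
    (hc : 0 ≤ c) (ha : 0 ≤ a) (hα : 0 < α) (hαβ : α < β / 2) (hγ : 0 < γ) (hγa : 1 / γ ≤ a / α)
    (hk : a ^ k * γ = β) (hP : 0 < P) (hX : X ≤ (Z ^ c * (Z * P ^ (γ / α))) ^ (a ^ k))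
    (hF : 0 ≤ F) (hFX : F ≤ Z * X) :
    F ^ (1 / β) ≤ Z ^ ((2 * a * (c + 1) + 1) * (1 / α - 1 / β)) * P ^ (1 / α) := by
  have hβ : 0 < β := by linarith
  have hZ₀ : 0 < Z := one_pos.trans_le hZ
  rw [eq_div_of_mul_eq hγ.ne' hk, ← mul_assoc, ← Real.rpow_add_one hZ₀.ne'] at hX
  calc F ^ (1 / β)
      ≤ (Z * (Z ^ (c + 1) * P ^ (γ / α)) ^ (β / γ)) ^ (1 / β) := by
        gcongr
        exact hFX.trans (by gcongr)
    _ = Z ^ (1 / β + (c + 1) / γ) * P ^ (1 / α) := by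
        rw [Real.mul_rpow hZ₀.le (by positivity), ← Real.rpow_mul (by positivity),
          Real.mul_rpow (by positivity) (by positivity), ← Real.rpow_mul hZ₀.le,
          ← Real.rpow_mul hP.le, Real.rpow_add hZ₀, mul_assoc]
        congr 3 <;> field_simp
    _ ≤ _ := by
        gcongr
        exact one_div_add_div_le ha (by linarith) hα hαβ hγa

end Iteration

section Norms

variable {A B : Finset V} {f : V → ℝ}

theorem nrm_nonneg (A : Finset V) (p : ℝ) (f : V → ℝ) : 0 ≤ nrm A p f := by
  unfold nrm
  positivity

theorem nrm_mono_exponent (hA : A.Nonempty) (f : V → ℝ) {p q : ℝ} (hp : 0 < p) (hpq : p ≤ q) :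
    nrm A p f ≤ nrm A q f := by
  have hq : 0 < q := hp.trans_le hpq
  have hcard : (#A : ℝ) ≠ 0 := Nat.cast_ne_zero.2 hA.card_ne_zero
  have jensen := Real.rpow_arith_mean_le_arith_mean_rpow A (fun _ => (#A : ℝ)⁻¹)
    (fun x => |f x| ^ p) (fun _ _ => by positivity)
    (by rw [sum_const, nsmul_eq_mul, mul_inv_cancel₀ hcard]) (fun _ _ => by positivity)
    ((one_le_div hp).2 hpq)
  simp only [← mul_sum, ← Real.rpow_mul (abs_nonneg _), mul_div_cancel₀ _ hp.ne'] at jensen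
  calc nrm A p f = (((#A : ℝ)⁻¹ * ∑ x ∈ A, |f x| ^ p) ^ (q / p)) ^ (1 / q) := by
        rw [← Real.rpow_mul (by positivity), div_mul_div_cancel₀' hq.ne', nrm]
    _ ≤ nrm A q f := by
        unfold nrm
        gcongr

theorem nrm_le_of_forall_abs_le {S p : ℝ} (hA : A.Nonempty) (hp : 0 < p)
    (hf : ∀ x ∈ A, |f x| ≤ S) : nrm A p f ≤ S := by
  have hS : 0 ≤ S := (abs_nonneg _).trans (hf _ hA.choose_spec)
  calc nrm A p f ≤ ((#A : ℝ)⁻¹ * ∑ _x ∈ A, S ^ p) ^ (1 / p) := by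
        unfold nrm
        gcongr with x hx
        exact hf x hx
    _ = S := by
        rw [sum_const, nsmul_eq_mul, inv_mul_cancel_left₀ (Nat.cast_ne_zero.2 hA.card_ne_zero),
          ← Real.rpow_mul hS, mul_one_div_cancel hp.ne', Real.rpow_one]

theorem nrm_le_nrmE (hA : A.Nonempty) (f : V → ℝ) {p : ℝ} {p' : ℝ≥0∞} (hp : 0 < p)
    (hpp' : ENNReal.ofReal p ≤ p') : nrm A p f ≤ nrmE A p' f := by
  unfold nrmE
  split_ifs with h
  · exact nrm_le_of_forall_abs_le hA hp fun x hx =>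
      le_csSup (A.finite_toSet.image _).bddAbove ⟨x, hx, rfl⟩
  · exact nrm_mono_exponent hA f hp ((ENNReal.ofReal_le_iff_le_toReal h).1 hpp')

theorem rpow_sum_rpow_eq_card_mul_nrm (hA : A.Nonempty) (hf : ∀ x, 0 ≤ f x) (p : ℝ) :
    (∑ x ∈ A, f x ^ p) ^ (1 / p) = (#A : ℝ) ^ (1 / p) * nrm A p f := by
  have h_sum : 0 ≤ ∑ x ∈ A, f x ^ p := sum_nonneg fun x _ => Real.rpow_nonneg (hf x) _
  simp only [nrm, abs_of_nonneg (hf _)]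
  rw [← Real.mul_rpow (by positivity) (by positivity),
    mul_inv_cancel_left₀ (Nat.cast_ne_zero.2 hA.card_ne_zero)]

theorem rpow_sum_rpow_le_card_mul (hAB : A ⊆ B) (hB : B.Nonempty) (hf : ∀ x, 0 ≤ f x)
    {p l M : ℝ} (hp : 0 < p) (hl : 0 ≤ l) (hl' : l ≤ 1) (hM : 1 ≤ M) (hfM : nrm B p f ≤ M) :
    (∑ x ∈ A, f x ^ p) ^ (l / p) ≤ (#B : ℝ) ^ (l / p) * M := by
  have h_nonneg : ∀ x, 0 ≤ f x ^ p := fun x => Real.rpow_nonneg (hf x) _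
  calc (∑ x ∈ A, f x ^ p) ^ (l / p) ≤ (∑ x ∈ B, f x ^ p) ^ (l / p) :=
        Real.rpow_le_rpow (sum_nonneg fun x _ => h_nonneg x)
          (sum_le_sum_of_subset_of_nonneg hAB fun x _ _ => h_nonneg x) (by positivity)
    _ = ((∑ x ∈ B, f x ^ p) ^ (1 / p)) ^ l := by
        rw [← Real.rpow_mul (sum_nonneg fun x _ => h_nonneg x), one_div_mul_eq_div]
    _ = (#B : ℝ) ^ (l / p) * nrm B p f ^ l := by
        rw [rpow_sum_rpow_eq_card_mul_nrm hB hf, Real.mul_rpow (by positivity) (nrm_nonneg B p f),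
          ← Real.rpow_mul (by positivity), one_div_mul_eq_div]
    _ ≤ (#B : ℝ) ^ (l / p) * M := by
        gcongr
        calc nrm B p f ^ l ≤ M ^ l := Real.rpow_le_rpow (nrm_nonneg B p f) hfM hl
          _ ≤ M := Real.rpow_le_self_of_one_le hM hl'

/-- `Mμ` and `Mν` are upper bounds, normalised to be at least `1`, for the averaged `p`- and
`q`-norms of `μ^ω` and `ν^ω` on `B`. -/
structure MomentBound (nbr : V → Finset V) (ω : V → V → ℝ) (B : Finset V) (p q Mμ Mν : ℝ) :
    Prop where
  one_le_mu : 1 ≤ Mμ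
  one_le_nu : 1 ≤ Mν
  nrm_mu_le : nrm B p (mu nbr ω) ≤ Mμ
  nrm_nu_le : nrm B q (nu nbr ω) ≤ Mν

theorem momentBound_max_nrmE (hB : B.Nonempty) (nbr : V → Finset V) (ω : V → V → ℝ) {p q : ℝ}
    {p' q' : ℝ≥0∞} (hp : 0 < p) (hq : 0 < q) (hpp' : ENNReal.ofReal p ≤ p')
    (hqq' : ENNReal.ofReal q ≤ q') :
    MomentBound nbr ω B p q (max 1 (nrmE B p' (mu nbr ω))) (max 1 (nrmE B q' (nu nbr ω))) where
  one_le_mu := le_max_left ..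
  one_le_nu := le_max_left ..
  nrm_mu_le := (nrm_le_nrmE hB _ hp hpp').trans (le_max_right ..)
  nrm_nu_le := (nrm_le_nrmE hB _ hq hqq').trans (le_max_right ..)

theorem interpolationConst_le {nbr : V → Finset V} {ω : V → V → ℝ} {s p q ρ l C Mμ Mν : ℝ}
    (hω : IsConductance nbr ω) (h : MoserExponents s p q ρ l) (hAB : A ⊆ B) (hB : B.Nonempty)
    (hM : MomentBound nbr ω B p q Mμ Mν) :
    interpolationConst nbr ω s p q ρ l C A ≤
      (C * (2 * ρ / s)) ^ 2 * (Mμ * Mν) * (#B : ℝ) ^ (1 / q + l / p) := by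
  have h_mu : (∑ x ∈ A, mu nbr ω x ^ p) ^ (l / p) ≤ (#B : ℝ) ^ (l / p) * Mμ :=
    rpow_sum_rpow_le_card_mul hAB hB (fun x => (hω.mu_pos x).le) (one_pos.trans h.one_lt_p)
      h.l_pos.le h.l_lt_one.le hM.one_le_mu hM.nrm_mu_le
  have h_nu : (∑ x ∈ A, nu nbr ω x ^ q) ^ (1 / q) ≤ (#B : ℝ) ^ (1 / q) * Mν :=
    rpow_sum_rpow_le_card_mul hAB hB hω.nu_nonneg (one_pos.trans h.one_lt_q)
      zero_le_one le_rfl hM.one_le_nu hM.nrm_nu_le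
  have h_nonneg : 0 ≤ (∑ x ∈ A, mu nbr ω x ^ p) ^ (l / p) :=
    Real.rpow_nonneg (sum_nonneg fun x _ => Real.rpow_nonneg (hω.mu_pos x).le _) _
  have hMν : 0 ≤ Mν := zero_le_one.trans hM.one_le_nu
  calc interpolationConst nbr ω s p q ρ l C A
      ≤ (C * (2 * ρ / s)) ^ 2 * ((#B : ℝ) ^ (1 / q) * Mν) * ((#B : ℝ) ^ (l / p) * Mμ) := by
        unfold interpolationConst
        gcongr
    _ = (C * (2 * ρ / s)) ^ 2 * (Mμ * Mν) * (#B : ℝ) ^ (1 / q + l / p) := by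
        rw [Real.rpow_add (Nat.cast_pos.2 hB.card_pos)]
        ring

end Norms

section Exponents

theorem exists_real_le_one_div_lt_add {r : ℝ≥0∞} (hr : 1 < r) {κ : ℝ} (hκ : 0 < κ) :
    ∃ r' : ℝ, 1 < r' ∧ ENNReal.ofReal r' ≤ r ∧ 1 / r' < r⁻¹.toReal + κ := by
  rcases eq_or_ne r ⊤ with rfl | h
  · refine ⟨1 + 1 / κ, lt_add_of_pos_right _ (by positivity), le_top, ?_⟩
    rw [ENNReal.inv_top, ENNReal.toReal_zero, zero_add]
    exact (one_div_lt hκ (by positivity)).1 (lt_one_add _)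
  · refine ⟨r.toReal, (ENNReal.ofReal_lt_iff_lt_toReal zero_le_one h).1 (by simpa using hr),
      ENNReal.ofReal_toReal_le, ?_⟩
    rw [ENNReal.toReal_inv, one_div]
    exact lt_add_of_pos_right _ hκ

theorem exists_real_exponents {d : ℕ} (hd : d ≠ 0) {p q : ℝ≥0∞} (hp : 1 < p) (hq : 1 < q)
    (hpq : p⁻¹ + q⁻¹ < 2 / (d : ℝ≥0∞)) :
    ∃ p' q' : ℝ, 1 < p' ∧ 1 < q' ∧ ENNReal.ofReal p' ≤ p ∧ ENNReal.ofReal q' ≤ q ∧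
      1 / p' + 1 / q' < 2 / d := by
  have hp_inv : p⁻¹ ≠ ⊤ := ENNReal.inv_ne_top.2 (one_pos.trans hp).ne'
  have hq_inv : q⁻¹ ≠ ⊤ := ENNReal.inv_ne_top.2 (one_pos.trans hq).ne'
  have hlt : p⁻¹.toReal + q⁻¹.toReal < 2 / d := by
    have h := (ENNReal.toReal_lt_toReal (ENNReal.add_ne_top.2 ⟨hp_inv, hq_inv⟩)
      (ENNReal.div_ne_top ENNReal.ofNat_ne_top (Nat.cast_ne_zero.2 hd))).2 hpq
    rwa [ENNReal.toReal_add hp_inv hq_inv, ENNReal.toReal_div, ENNReal.toReal_ofNat,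
      ENNReal.toReal_natCast] at h
  have hκ := half_pos (sub_pos.2 hlt)
  obtain ⟨p', hp', hpp', hp_lt⟩ := exists_real_le_one_div_lt_add hp hκ
  obtain ⟨q', hq', hqq', hq_lt⟩ := exists_real_le_one_div_lt_add hq hκ
  exact ⟨p', q', hp', hq', hpp', hqq', by linarith⟩

theorem exists_moserExponents {D p q : ℝ} (hD : 2 ≤ D) (hp : 1 < p) (hq : 1 < q)
    (hpq : 1 / p + 1 / q < 2 / D) :
    ∃ s ρ l : ℝ, 1 / s = 1 - 1 / D ∧ MoserExponents s p q ρ l := by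
  have hD_inv : 1 / D ≤ 1 / 2 := one_div_le_one_div_of_le two_pos hD
  have hD_inv' : 0 < 1 / D := by positivity
  have hq_inv : 0 < 1 / q := by positivity
  have hp_inv : 0 < 1 - 1 / p := sub_pos.2 ((div_lt_one (by positivity)).2 hp)
  rw [div_eq_mul_one_div 2] at hpq
  set r := 2 * (1 - 1 / D) - 1 + 1 / q with hr
  have hr₀ : 0 < r := by linarith
  exact ⟨1 / (1 - 1 / D), 1 / r, r / (1 - 1 / p), one_div_one_div _,
    { one_le_s := (one_le_div (by linarith)).2 (by linarith)
      one_lt_p := hp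
      one_lt_q := hq
      ρ_pos := by positivity
      l_pos := by positivity
      l_lt_one := (div_lt_one hp_inv).2 (by linarith)
      one_div_ρ := by rw [one_div_one_div, div_mul_cancel₀ _ hp_inv.ne']
      one_div_ρ_eq_sobolev := by rw [one_div_one_div, hr, div_div_eq_mul_div, div_one] }⟩

theorem MoserExponents.one_sub_add_add_eq {s p q ρ l : ℝ} (h : MoserExponents s p q ρ l) :
    1 - l + (1 / q + l / p) = 2 * (1 - 1 / s) := by
  have := h.one_div_ρ.symm.trans h.one_div_ρ_eq_sobolev
  rw [div_eq_mul_one_div 2 s] at this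
  rw [div_eq_mul_one_div l p]
  linarith

end Exponents

section SpaceTimeMass

variable {nbr : V → Finset V} {ω : V → V → ℝ} {A A' : Finset V} {u : ℝ → V → ℝ} {a b : ℝ}

theorem rpow_le_rpow_mul_add {P y α γ : ℝ} (hP : 0 < P) (hy : 0 ≤ y) (hγ : 0 < γ) (hγα : γ ≤ α) :
    y ^ γ ≤ P ^ (γ / α) * (γ / α / P * y ^ α + (1 - γ / α)) := by
  have hα : 0 < α := hγ.trans_le hγα
  have amgm := Real.geom_mean_le_arith_mean2_weighted (div_nonneg hγ.le hα.le)
    (sub_nonneg.2 ((div_le_one hα).2 hγα)) (by positivity : 0 ≤ y ^ α / P) zero_le_one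
    (add_sub_cancel _ _)
  rw [Real.one_rpow, mul_one, mul_one, Real.div_rpow (by positivity) hP.le, ← Real.rpow_mul hy,
    mul_div_cancel₀ _ hα.ne', div_le_iff₀' (by positivity)] at amgm
  rwa [div_mul_eq_mul_div, mul_div_assoc]

theorem mass_le_rpow_mul_add (hω : IsConductance nbr ω) {f : V → ℝ} (hf : ∀ x, 0 ≤ f x)
    {P α γ : ℝ} (hP : 0 < P) (hγ : 0 < γ) (hγα : γ ≤ α) : mass nbr ω γ A f ≤
      P ^ (γ / α) * (γ / α / P * mass nbr ω α A f + (1 - γ / α) * ∑ x ∈ A, mu nbr ω x) :=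
  calc mass nbr ω γ A f
      ≤ ∑ x ∈ A, P ^ (γ / α) * (γ / α / P * f x ^ α + (1 - γ / α)) * mu nbr ω x :=
        sum_le_sum fun x _ => mul_le_mul_of_nonneg_right
          (rpow_le_rpow_mul_add hP (hf x) hγ hγα) (hω.mu_pos x).le
    _ = _ := by
        rw [mass, mul_sum, mul_sum, ← sum_add_distrib, mul_sum]
        exact sum_congr rfl fun x _ => by ring

theorem nrmST_eq_rpow_integral_mass {β : ℝ} (hab : a ≤ b)
    (hu : ∀ t ∈ Set.Icc a b, ∀ x, 0 ≤ u t x) (hω : IsConductance nbr ω) (hβ : β ≠ 0) :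
    nrmST a b A β (mu nbr ω) u =
      (((b - a) * (#A : ℝ))⁻¹ * ∫ t in a..b, mass nbr ω β A (u t)) ^ (1 / β) := by
  have h_congr : ∫ t in a..b, nrmW A β (mu nbr ω) (u t) ^ β =
      ∫ t in a..b, (#A : ℝ)⁻¹ * mass nbr ω β A (u t) := by
    refine intervalIntegral.integral_congr fun t ht => ?_
    rw [Set.uIcc_of_le hab] at ht
    simp only [nrmW, abs_of_nonneg (hu t ht _), one_div]
    exact Real.rpow_inv_rpow
      (mul_nonneg (inv_nonneg.2 (Nat.cast_nonneg _)) (mass_nonneg hω (hu t ht))) hβ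
  rw [nrmST, h_congr, intervalIntegral.integral_const_mul, mul_inv, mul_assoc]

namespace IsPosSuperCaloric

theorem intervalIntegrable_mass (hab : a ≤ b) (hu : IsPosSuperCaloric nbr ω (Set.Icc a b) A u)
    (γ : ℝ) : IntervalIntegrable (fun t => mass nbr ω γ A (u t)) volume a b :=
  (hu.continuousOn_mass γ).intervalIntegrable_of_Icc hab

theorem integral_mass_pos (hu : IsPosSuperCaloric nbr ω (Set.Icc a b) A u)
    (hω : IsConductance nbr ω) (hab : a < b) (hA : A.Nonempty) (γ : ℝ) :
    0 < ∫ t in a..b, mass nbr ω γ A (u t) :=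
  intervalIntegral.intervalIntegral_pos_of_pos_on (hu.intervalIntegrable_mass hab.le γ)
    (fun t ht => sum_pos (fun x _ => mul_pos
      (Real.rpow_pos_of_pos (hu.pos t (Set.Ioo_subset_Icc_self ht) x) _) (hω.mu_pos x)) hA) hab

theorem integral_mass_mono (hu : IsPosSuperCaloric nbr ω (Set.Icc a b) A u)
    (hω : IsConductance nbr ω) {a' b' : ℝ} (ha : a ≤ a') (hab : a' ≤ b') (hb : b' ≤ b)
    (hA : A' ⊆ A) (γ : ℝ) :
    ∫ t in a'..b', mass nbr ω γ A' (u t) ≤ ∫ t in a..b, mass nbr ω γ A (u t) := by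
  have hI : Set.Icc a' b' ⊆ Set.Icc a b := Set.Icc_subset_Icc ha hb
  calc ∫ t in a'..b', mass nbr ω γ A' (u t)
      ≤ ∫ t in a'..b', mass nbr ω γ A (u t) :=
        intervalIntegral.integral_mono_on hab ((hu.mono hI hA).intervalIntegrable_mass hab γ)
          ((hu.mono hI subset_rfl).intervalIntegrable_mass hab γ) fun t ht =>
            sum_le_sum_of_subset_of_nonneg hA fun x _ _ =>
              mul_nonneg (Real.rpow_nonneg (hu.pos t (hI ht) x).le _) (hω.mu_pos x).le
    _ ≤ ∫ t in a..b, mass nbr ω γ A (u t) := by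
        refine intervalIntegral.integral_mono_interval ha hab hb ?_
          (hu.intervalIntegrable_mass (ha.trans (hab.trans hb)) γ)
        filter_upwards [self_mem_ae_restrict measurableSet_Ioc] with t ht
        exact mass_nonneg hω fun x => (hu.pos t (Set.Ioc_subset_Icc_self ht) x).le

/-- Jensen's inequality for the concave power `γ / α`, as the integral of its tangent at the
average. -/
theorem integral_mass_le_rpow (hu : IsPosSuperCaloric nbr ω (Set.Icc a b) A u)
    (hω : IsConductance nbr ω) (hab : a < b) (hA : A.Nonempty) {κ α γ M : ℝ} (hγ : 0 < γ)
    (hγα : γ ≤ α) (hκ : 0 < κ) (hM : 1 ≤ M) (hμM : κ * ((b - a) * ∑ x ∈ A, mu nbr ω x) ≤ M) :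
    κ * ∫ t in a..b, mass nbr ω γ A (u t) ≤
      M * (κ * ∫ t in a..b, mass nbr ω α A (u t)) ^ (γ / α) := by
  set F := ∫ t in a..b, mass nbr ω α A (u t)
  set P := κ * F with hP
  set θ := γ / α
  set m := ∑ x ∈ A, mu nbr ω x
  have hP₀ : 0 < P := mul_pos hκ (hu.integral_mass_pos hω hab hA α)
  have hθ₁ : 0 ≤ 1 - θ := sub_nonneg.2 ((div_le_one (hγ.trans_le hγα)).2 hγα)
  have h_int := (hu.intervalIntegrable_mass hab.le α).const_mul (θ / P)
  have h_tangent : ∫ t in a..b, mass nbr ω γ A (u t) ≤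
      P ^ θ * (θ / P * F + (1 - θ) * ((b - a) * m)) := by
    refine (intervalIntegral.integral_mono_on hab.le (hu.intervalIntegrable_mass hab.le γ)
      ((h_int.add intervalIntegrable_const).const_mul (P ^ θ)) fun t ht =>
        mass_le_rpow_mul_add hω (fun x => (hu.pos t ht x).le) hP₀ hγ hγα).trans_eq ?_
    rw [intervalIntegral.integral_const_mul, intervalIntegral.integral_add h_int
      intervalIntegrable_const, intervalIntegral.integral_const_mul,
      intervalIntegral.integral_const, smul_eq_mul, mul_left_comm (b - a)]
  calc κ * ∫ t in a..b, mass nbr ω γ A (u t)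
      ≤ κ * (P ^ θ * (θ / P * F + (1 - θ) * ((b - a) * m))) := by gcongr
    _ = P ^ θ * (θ + (1 - θ) * (κ * ((b - a) * m))) := by
        have hF₀ : F ≠ 0 := right_ne_zero_of_mul hP₀.ne'
        rw [hP]
        field_simp
    _ ≤ P ^ θ * (θ + (1 - θ) * M) := by gcongr
    _ ≤ M * P ^ θ := by
        rw [mul_comm M]
        gcongr
        nlinarith [div_nonneg hγ.le (hγ.le.trans hγα)]

end IsPosSuperCaloric

end SpaceTimeMass

section Cylinders

/-- The time parameters of the cylinders `Q(σn)`: the interval `[s', s'']` stays at distance at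
least `εn²` from both ends of `[t₀, t₀ + n²]`. -/
structure AdmissibleTimes (ε t₀ n s' s'' : ℝ) : Prop where
  ε_pos : 0 < ε
  one_le_n : 1 ≤ n
  s'_le_s'' : s' ≤ s''
  start_gap : ε * n ^ 2 ≤ s' - t₀
  end_gap : ε * n ^ 2 ≤ t₀ + n ^ 2 - s''

/-- The left end point of the time interval `I_σ` of `Q(σn)`. -/
def cylStart (t₀ s' σ : ℝ) : ℝ := σ * t₀ + (1 - σ) * s'

/-- The right end point of the time interval `I_σ` of `Q(σn)`. -/
def cylEnd (t₀ n s'' σ : ℝ) : ℝ := (1 - σ) * s'' + σ * (t₀ + n ^ 2)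

/-- The integral of `u ^ γ` over `Q(σn)`, where `b r` plays the role of `B(x₀, r)`. It is divided
by the size of `Q(n)` for every `σ`, so that it is monotone in `σ`. -/
def cylinderMass (nbr : V → Finset V) (ω : V → V → ℝ) (b : ℝ → Finset V) (t₀ n s' s'' : ℝ)
    (u : ℝ → V → ℝ) (γ σ : ℝ) : ℝ :=
  (n ^ 2 * (#(b n) : ℝ))⁻¹ *
    ∫ t in cylStart t₀ s' σ..cylEnd t₀ n s'' σ, mass nbr ω γ (b (σ * n)) (u t)

variable {nbr : V → Finset V} {ω : V → V → ℝ} {b : ℝ → Finset V} {ε t₀ n s' s'' σ σ' : ℝ}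
  {u : ℝ → V → ℝ}

namespace AdmissibleTimes

theorem n_pos (ht : AdmissibleTimes ε t₀ n s' s'') : 0 < n := one_pos.trans_le ht.one_le_n

theorem gap_pos (ht : AdmissibleTimes ε t₀ n s' s'') : 0 < ε * n ^ 2 :=
  mul_pos ht.ε_pos (pow_pos ht.n_pos 2)

theorem ε_le_one (ht : AdmissibleTimes ε t₀ n s' s'') : ε ≤ 1 := by
  refine le_of_mul_le_mul_right ?_ (pow_pos ht.n_pos 2)
  linarith [ht.gap_pos, ht.s'_le_s'', ht.start_gap, ht.end_gap]

theorem le_cylStart_sub (ht : AdmissibleTimes ε t₀ n s' s'') (hσσ : σ' ≤ σ) :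
    (σ - σ') * (ε * n ^ 2) ≤ cylStart t₀ s' σ' - cylStart t₀ s' σ := by
  unfold cylStart
  linarith [mul_le_mul_of_nonneg_left ht.start_gap (sub_nonneg.2 hσσ)]

theorem le_cylEnd_sub (ht : AdmissibleTimes ε t₀ n s' s'') (hσσ : σ' ≤ σ) :
    (σ - σ') * (ε * n ^ 2) ≤ cylEnd t₀ n s'' σ - cylEnd t₀ n s'' σ' := by
  unfold cylEnd
  linarith [mul_le_mul_of_nonneg_left ht.end_gap (sub_nonneg.2 hσσ)]

theorem cylStart_antitone (ht : AdmissibleTimes ε t₀ n s' s'') (hσσ : σ' ≤ σ) :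
    cylStart t₀ s' σ ≤ cylStart t₀ s' σ' :=
  sub_nonneg.1 ((mul_nonneg (sub_nonneg.2 hσσ) ht.gap_pos.le).trans (ht.le_cylStart_sub hσσ))

theorem cylEnd_monotone (ht : AdmissibleTimes ε t₀ n s' s'') (hσσ : σ' ≤ σ) :
    cylEnd t₀ n s'' σ' ≤ cylEnd t₀ n s'' σ :=
  sub_nonneg.1 ((mul_nonneg (sub_nonneg.2 hσσ) ht.gap_pos.le).trans (ht.le_cylEnd_sub hσσ))

theorem le_cylStart (ht : AdmissibleTimes ε t₀ n s' s'') (hσ : σ ≤ 1) :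
    t₀ ≤ cylStart t₀ s' σ := by
  simpa [cylStart] using ht.cylStart_antitone hσ

theorem cylEnd_le (ht : AdmissibleTimes ε t₀ n s' s'') (hσ : σ ≤ 1) :
    cylEnd t₀ n s'' σ ≤ t₀ + n ^ 2 := by
  simpa [cylEnd] using ht.cylEnd_monotone hσ

theorem length_le (ht : AdmissibleTimes ε t₀ n s' s'') (hσ : σ ≤ 1) :
    cylEnd t₀ n s'' σ - cylStart t₀ s' σ ≤ n ^ 2 := by
  linarith [ht.le_cylStart hσ, ht.cylEnd_le hσ]

theorem half_sq_le_length (ht : AdmissibleTimes ε t₀ n s' s'') (hσ : 1 / 2 ≤ σ) (hσ' : σ ≤ 1) :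
    n ^ 2 / 2 ≤ cylEnd t₀ n s'' σ - cylStart t₀ s' σ := by
  unfold cylStart cylEnd
  linarith [mul_nonneg (sub_nonneg.2 hσ') (sub_nonneg.2 ht.s'_le_s''),
    mul_le_mul_of_nonneg_right hσ (sq_nonneg n)]

theorem cylStart_lt_cylEnd (ht : AdmissibleTimes ε t₀ n s' s'') (hσ : 1 / 2 ≤ σ) (hσ' : σ ≤ 1) :
    cylStart t₀ s' σ < cylEnd t₀ n s'' σ :=
  sub_pos.1 ((half_pos (pow_pos ht.n_pos 2)).trans_le (ht.half_sq_le_length hσ hσ'))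

theorem radius_nonneg (ht : AdmissibleTimes ε t₀ n s' s'') (hσ : 1 / 2 ≤ σ) : 0 ≤ σ * n :=
  mul_nonneg (by linarith) ht.n_pos.le

theorem isPosSuperCaloric (ht : AdmissibleTimes ε t₀ n s' s'') (hb : Monotone b)
    (hu : IsPosSuperCaloric nbr ω (Set.Icc t₀ (t₀ + n ^ 2)) (b n) u) (hσ : σ ≤ 1) :
    IsPosSuperCaloric nbr ω (Set.Icc (cylStart t₀ s' σ) (cylEnd t₀ n s'' σ)) (b (σ * n)) u :=
  hu.mono (Set.Icc_subset_Icc (ht.le_cylStart hσ) (ht.cylEnd_le hσ))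
    (hb (mul_le_of_le_one_left ht.n_pos.le hσ))

end AdmissibleTimes

theorem cylinderMass_pos (ht : AdmissibleTimes ε t₀ n s' s'') (hω : IsConductance nbr ω)
    (hb : Monotone b) (hb₀ : (b 0).Nonempty)
    (hu : IsPosSuperCaloric nbr ω (Set.Icc t₀ (t₀ + n ^ 2)) (b n) u) (γ : ℝ) (hσ : 1 / 2 ≤ σ)
    (hσ' : σ ≤ 1) : 0 < cylinderMass nbr ω b t₀ n s' s'' u γ σ :=
  mul_pos (inv_pos.2 (mul_pos (pow_pos ht.n_pos 2)
      (Nat.cast_pos.2 (hb₀.mono (hb ht.n_pos.le)).card_pos)))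
    ((ht.isPosSuperCaloric hb hu hσ').integral_mass_pos hω (ht.cylStart_lt_cylEnd hσ hσ')
      (hb₀.mono (hb (ht.radius_nonneg hσ))) γ)

theorem cylinderMass_mono (ht : AdmissibleTimes ε t₀ n s' s'') (hω : IsConductance nbr ω)
    (hb : Monotone b) (hu : IsPosSuperCaloric nbr ω (Set.Icc t₀ (t₀ + n ^ 2)) (b n) u) (γ : ℝ)
    (hσ' : 1 / 2 ≤ σ') (hσσ : σ' ≤ σ) (hσ : σ ≤ 1) :
    cylinderMass nbr ω b t₀ n s' s'' u γ σ' ≤ cylinderMass nbr ω b t₀ n s' s'' u γ σ :=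
  mul_le_mul_of_nonneg_left ((ht.isPosSuperCaloric hb hu hσ).integral_mass_mono hω
    (ht.cylStart_antitone hσσ) (ht.cylStart_lt_cylEnd hσ' (hσσ.trans hσ)).le
    (ht.cylEnd_monotone hσσ) (hb (mul_le_mul_of_nonneg_right hσσ ht.n_pos.le)) γ) (by positivity)

theorem cylinderMass_le_mul_rpow (ht : AdmissibleTimes ε t₀ n s' s'') (hω : IsConductance nbr ω)
    (hb : Monotone b) (hb₀ : (b 0).Nonempty)
    (hu : IsPosSuperCaloric nbr ω (Set.Icc t₀ (t₀ + n ^ 2)) (b n) u) {p α γ M : ℝ} (hp : 1 ≤ p)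
    (hγ : 0 < γ) (hγα : γ ≤ α) (hM : 1 ≤ M) (hμ : nrm (b n) p (mu nbr ω) ≤ M) (hσ : 1 / 2 ≤ σ)
    (hσ' : σ ≤ 1) : cylinderMass nbr ω b t₀ n s' s'' u γ σ ≤
      M * cylinderMass nbr ω b t₀ n s' s'' u α σ ^ (γ / α) := by
  have hbn : (b n).Nonempty := hb₀.mono (hb ht.n_pos.le)
  have : (0 : ℝ) < #(b n) := Nat.cast_pos.2 hbn.card_pos
  have hn := ht.n_pos
  have h_mean : (#(b n) : ℝ)⁻¹ * ∑ x ∈ b n, mu nbr ω x ≤ M := by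
    have h := (nrm_mono_exponent hbn (mu nbr ω) one_pos hp).trans hμ
    simpa [nrm, abs_of_pos (hω.mu_pos _)] using h
  refine (ht.isPosSuperCaloric hb hu hσ').integral_mass_le_rpow hω
    (ht.cylStart_lt_cylEnd hσ hσ') (hb₀.mono (hb (ht.radius_nonneg hσ))) hγ hγα (by positivity)
    hM ?_
  calc (n ^ 2 * (#(b n) : ℝ))⁻¹ *
        ((cylEnd t₀ n s'' σ - cylStart t₀ s' σ) * ∑ x ∈ b (σ * n), mu nbr ω x)
      ≤ (n ^ 2 * (#(b n) : ℝ))⁻¹ * (n ^ 2 * ∑ x ∈ b n, mu nbr ω x) := by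
        gcongr
        · exact sum_nonneg fun x _ => (hω.mu_pos x).le
        · exact ht.length_le hσ'
        · exact fun x _ _ => (hω.mu_pos x).le
        · exact hb (mul_le_of_le_one_left hn.le hσ')
    _ = (#(b n) : ℝ)⁻¹ * ∑ x ∈ b n, mu nbr ω x := by field_simp
    _ ≤ M := h_mean

theorem cylinderMass_rpow_le_nrmST (ht : AdmissibleTimes ε t₀ n s' s'')
    (hω : IsConductance nbr ω) (hb : Monotone b) (hb₀ : (b 0).Nonempty)
    (hu : IsPosSuperCaloric nbr ω (Set.Icc t₀ (t₀ + n ^ 2)) (b n) u) {α : ℝ} (hα : 0 < α)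
    (hσ : 1 / 2 ≤ σ) (hσ' : σ ≤ 1) :
    cylinderMass nbr ω b t₀ n s' s'' u α σ ^ (1 / α) ≤
      nrmST (cylStart t₀ s' σ) (cylEnd t₀ n s'' σ) (b (σ * n)) α (mu nbr ω) u := by
  have hQ := ht.isPosSuperCaloric hb hu hσ'
  have h_lt := ht.cylStart_lt_cylEnd hσ hσ'
  have hbσ := hb₀.mono (hb (ht.radius_nonneg hσ))
  rw [nrmST_eq_rpow_integral_mass h_lt.le (fun t h x => (hQ.pos t h x).le) hω hα.ne']
  refine Real.rpow_le_rpow (cylinderMass_pos ht hω hb hb₀ hu α hσ hσ').le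
    (mul_le_mul_of_nonneg_right ?_ (hQ.integral_mass_pos hω h_lt hbσ α).le) (by positivity)
  refine inv_anti₀ (mul_pos (sub_pos.2 h_lt) (Nat.cast_pos.2 hbσ.card_pos)) ?_
  gcongr
  · exact ht.length_le hσ'
  · exact hb (mul_le_of_le_one_left ht.n_pos.le hσ')

theorem nrmST_le_mul_cylinderMass_rpow (ht : AdmissibleTimes ε t₀ n s' s'')
    (hω : IsConductance nbr ω) (hb : Monotone b) (hb₀ : (b 0).Nonempty)
    (hu : IsPosSuperCaloric nbr ω (Set.Icc t₀ (t₀ + n ^ 2)) (b n) u) {β D : ℝ} (hβ : 0 < β)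
    (h_card : (#(b n) : ℝ) ≤ D * #(b (σ * n))) (hσ : 1 / 2 ≤ σ) (hσ' : σ ≤ 1) :
    nrmST (cylStart t₀ s' σ) (cylEnd t₀ n s'' σ) (b (σ * n)) β (mu nbr ω) u ≤
      (2 * D * cylinderMass nbr ω b t₀ n s' s'' u β σ) ^ (1 / β) := by
  have hQ := ht.isPosSuperCaloric hb hu hσ'
  have h_len := sub_pos.2 (ht.cylStart_lt_cylEnd hσ hσ')
  have h_half := ht.half_sq_le_length hσ hσ'
  have hbσ : (0 : ℝ) < #(b (σ * n)) :=
    Nat.cast_pos.2 (hb₀.mono (hb (ht.radius_nonneg hσ))).card_pos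
  have hbn : (0 : ℝ) < #(b n) := Nat.cast_pos.2 (hb₀.mono (hb ht.n_pos.le)).card_pos
  have h_int := hQ.integral_mass_pos hω (sub_pos.1 h_len) (hb₀.mono (hb (ht.radius_nonneg hσ))) β
  rw [nrmST_eq_rpow_integral_mass (sub_pos.1 h_len).le (fun t h x => (hQ.pos t h x).le) hω hβ.ne',
    cylinderMass, ← mul_assoc]
  refine Real.rpow_le_rpow (by positivity)
    (mul_le_mul_of_nonneg_right ?_ h_int.le) (by positivity)
  rw [← div_eq_mul_inv, inv_eq_one_div,
    div_le_div_iff₀ (by positivity) (mul_pos (pow_pos ht.n_pos 2) hbn), one_mul]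
  calc n ^ 2 * (#(b n) : ℝ)
      ≤ 2 * (cylEnd t₀ n s'' σ - cylStart t₀ s' σ) * (D * #(b (σ * n))) := by
        gcongr
        linarith
    _ = 2 * D * ((cylEnd t₀ n s'' σ - cylStart t₀ s' σ) * #(b (σ * n))) := by ring

end Cylinders

section Step

variable {nbr : V → Finset V} {ω : V → V → ℝ} {b : ℝ → Finset V}
  {ε t₀ n s' s'' s p q ρ l C Cv Mμ Mν σ σ' : ℝ} {u : ℝ → V → ℝ}

/-- The sets `b r` behave like the balls `B(x₀, r)` with a fixed centre: they increase with `r`,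
and between two of them there are cutoff functions of the expected slope. -/
structure IsConcentricFamily (nbr : V → Finset V) (b : ℝ → Finset V) : Prop where
  mono : Monotone b
  nonempty : (b 0).Nonempty
  exists_isCutoff : ∀ r' r, r' < r → ∃ η, IsCutoff nbr η (b r') (b r) (1 / (r - r'))

theorem AdmissibleTimes.cutoff_factor_le (ht : AdmissibleTimes ε t₀ n s' s'') (hσ' : 0 ≤ σ')
    (hσσ : σ' < σ) (hσ : σ ≤ 1) :
    (8 + 84 * (1 / (σ * n - σ' * n)) ^ 2 * (cylEnd t₀ n s'' σ - cylStart t₀ s' σ)) /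
      (cylEnd t₀ n s'' σ - cylEnd t₀ n s'' σ') ≤ 92 / (ε * (σ - σ') ^ 3) / n ^ 2 := by
  have hε := ht.ε_pos
  have hn := ht.n_pos
  have hδ : 0 < σ - σ' := sub_pos.2 hσσ
  have hδ₁ : (σ - σ') ^ 2 ≤ 1 := pow_le_one₀ hδ.le (by linarith)
  rw [← sub_mul]
  calc (8 + 84 * (1 / ((σ - σ') * n)) ^ 2 * (cylEnd t₀ n s'' σ - cylStart t₀ s' σ)) /
        (cylEnd t₀ n s'' σ - cylEnd t₀ n s'' σ')
      ≤ (8 + 84 * (1 / ((σ - σ') * n)) ^ 2 * n ^ 2) / ((σ - σ') * (ε * n ^ 2)) := by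
        gcongr
        · exact ht.length_le hσ
        · exact ht.le_cylEnd_sub hσσ.le
    _ = (8 * (σ - σ') ^ 2 + 84) / (ε * (σ - σ') ^ 3) / n ^ 2 := by field_simp
    _ ≤ 92 / (ε * (σ - σ') ^ 3) / n ^ 2 := by
        gcongr
        linarith

theorem MoserExponents.inv_mul_rpow_mul_rpow_le {N z : ℝ} (h : MoserExponents s p q ρ l)
    (hN : 0 < N) (hn : 0 < n) (hz : 0 ≤ z) (hvol : N ^ (2 * (1 - 1 / s)) ≤ Cv * n ^ 2) :
    (n ^ 2 * N)⁻¹ * ((N * z) ^ (2 - l) * N ^ (1 / q + l / p)) ≤ Cv * z ^ (2 - l) := by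
  have h_split : N ^ (2 - l) * N ^ (1 / q + l / p) = N * N ^ (2 * (1 - 1 / s)) := by
    rw [← h.one_sub_add_add_eq, ← Real.rpow_add hN, ← Real.rpow_one_add' hN.le]
    · ring_nf
    · rw [← add_assoc, ← add_sub_assoc]
      have := h.l_lt_one
      have : 0 ≤ 1 / q + l / p := add_nonneg (one_div_nonneg.2 (one_pos.trans h.one_lt_q).le)
        (div_nonneg h.l_pos.le (one_pos.trans h.one_lt_p).le)
      linarith
  calc (n ^ 2 * N)⁻¹ * ((N * z) ^ (2 - l) * N ^ (1 / q + l / p))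
      = (n ^ 2)⁻¹ * N ^ (2 * (1 - 1 / s)) * z ^ (2 - l) := by
        rw [Real.mul_rpow hN.le hz, mul_right_comm _ _ (N ^ (1 / q + l / p)), h_split]
        field_simp
    _ ≤ Cv * z ^ (2 - l) := by
        gcongr
        rwa [inv_mul_le_iff₀ (pow_pos hn 2), mul_comm (n ^ 2)]

theorem AdmissibleTimes.integral_mass_le_rpow (ht : AdmissibleTimes ε t₀ n s' s'')
    (hω : IsConductance nbr ω) (hb : IsConcentricFamily nbr b)
    (hu : IsPosSuperCaloric nbr ω (Set.Icc t₀ (t₀ + n ^ 2)) (b n) u)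
    (h : MoserExponents s p q ρ l) (hiso : EdgeIsoperimetric nbr (1 / s) C) (hC : 0 ≤ C)
    {γ : ℝ} (hγ : 0 < γ) (hγ' : γ ≤ 1 / 2) (hσ' : 1 / 2 ≤ σ') (hσσ : σ' < σ) (hσ : σ ≤ 1) :
    ∫ t in cylStart t₀ s' σ'..cylEnd t₀ n s'' σ',
        mass nbr ω ((2 - l) * γ) (b (σ' * n)) (u t) ≤
      (92 / (ε * (σ - σ') ^ 3) / n ^ 2 *
          ∫ t in cylStart t₀ s' σ..cylEnd t₀ n s'' σ, mass nbr ω γ (b (σ * n)) (u t)) ^ (2 - l) *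
        interpolationConst nbr ω s p q ρ l C (b (σ * n)) := by
  have hn := ht.n_pos
  have h_lt := ht.cylStart_lt_cylEnd (hσ'.trans hσσ.le) hσ
  have h_gap : 0 < cylEnd t₀ n s'' σ - cylEnd t₀ n s'' σ' :=
    (mul_pos (sub_pos.2 hσσ) ht.gap_pos).trans_le (ht.le_cylEnd_sub hσσ.le)
  have hQ := ht.isPosSuperCaloric hb.mono hu hσ
  have h_int := hQ.integral_mass_pos hω h_lt
    (hb.nonempty.mono (hb.mono (ht.radius_nonneg (hσ'.trans hσσ.le)))) γ
  obtain ⟨η, hη⟩ := hb.exists_isCutoff (σ' * n) (σ * n) (mul_lt_mul_of_pos_right hσσ hn)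
  refine (hQ.integral_mass_le hω h hiso hC hη
    (hb.mono (mul_le_mul_of_nonneg_right hσσ.le hn.le)) hγ hγ' (ht.cylStart_antitone hσσ.le)
    (ht.cylStart_lt_cylEnd hσ' (hσσ.le.trans hσ)).le (sub_pos.1 h_gap)).trans ?_
  have := sub_pos.2 h_lt
  exact mul_le_mul_of_nonneg_right (Real.rpow_le_rpow (by positivity)
    (mul_le_mul_of_nonneg_right (ht.cutoff_factor_le (by linarith) hσσ hσ) h_int.le)
    (by linarith [h.l_lt_one])) (interpolationConst_nonneg hω ..)

/-- The constant of a step of the iteration; `Cv` bounds `|B(x₀, n)| ^ (2 (1 - 1 / s)) / n ^ 2`. -/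
def stepConst (s ρ C Cv : ℝ) : ℝ := 1 + (C * (2 * ρ / s)) ^ 2 * Cv

theorem one_le_stepConst (s ρ C : ℝ) (hCv : 0 ≤ Cv) : 1 ≤ stepConst s ρ C Cv :=
  le_add_of_nonneg_right (mul_nonneg (sq_nonneg _) hCv)

theorem cylinderMass_two_sub_mul_le (ht : AdmissibleTimes ε t₀ n s' s'')
    (hω : IsConductance nbr ω) (hb : IsConcentricFamily nbr b)
    (hu : IsPosSuperCaloric nbr ω (Set.Icc t₀ (t₀ + n ^ 2)) (b n) u)
    (h : MoserExponents s p q ρ l) (hiso : EdgeIsoperimetric nbr (1 / s) C) (hC : 0 ≤ C)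
    (hvol : (#(b n) : ℝ) ^ (2 * (1 - 1 / s)) ≤ Cv * n ^ 2)
    (hM : MomentBound nbr ω (b n) p q Mμ Mν) {γ : ℝ} (hγ : 0 < γ) (hγ' : γ ≤ 1 / 2)
    (hσ' : 1 / 2 ≤ σ') (hσσ : σ' < σ) (hσ : σ ≤ 1) :
    cylinderMass nbr ω b t₀ n s' s'' u ((2 - l) * γ) σ' ≤
      stepConst s ρ C Cv * (Mμ * Mν) *
        (92 / (ε * (σ - σ') ^ 3) * cylinderMass nbr ω b t₀ n s' s'' u γ σ) ^ (2 - l) := by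
  set N : ℝ := (#(b n) : ℝ)
  set Φ := cylinderMass nbr ω b t₀ n s' s'' u γ σ with hΦ
  set y := 92 / (ε * (σ - σ') ^ 3)
  set S := (C * (2 * ρ / s)) ^ 2
  have hbn : (b n).Nonempty := hb.nonempty.mono (hb.mono ht.n_pos.le)
  have hN : 0 < N := Nat.cast_pos.2 hbn.card_pos
  have hn := ht.n_pos
  have hMM : 0 ≤ Mμ * Mν :=
    mul_nonneg (zero_le_one.trans hM.one_le_mu) (zero_le_one.trans hM.one_le_nu)
  have hyΦ : 0 ≤ y * Φ := mul_nonneg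
    (div_nonneg (by norm_num) (mul_pos ht.ε_pos (pow_pos (sub_pos.2 hσσ) 3)).le)
    (cylinderMass_pos ht hω hb.mono hb.nonempty hu γ (hσ'.trans hσσ.le) hσ).le
  have h_step := ht.integral_mass_le_rpow hω hb hu h hiso hC hγ hγ' hσ' hσσ hσ
  rw [show ∫ t in cylStart t₀ s' σ..cylEnd t₀ n s'' σ, mass nbr ω γ (b (σ * n)) (u t) =
      n ^ 2 * N * Φ by rw [hΦ, cylinderMass, mul_inv_cancel_left₀ (by positivity)],
    show y / n ^ 2 * (n ^ 2 * N * Φ) = N * (y * Φ) by field_simp] at h_step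
  calc cylinderMass nbr ω b t₀ n s' s'' u ((2 - l) * γ) σ'
      ≤ (n ^ 2 * N)⁻¹ * ((N * (y * Φ)) ^ (2 - l) *
          (S * (Mμ * Mν) * N ^ (1 / q + l / p))) := by
        refine mul_le_mul_of_nonneg_left (h_step.trans ?_) (by positivity)
        gcongr
        exact interpolationConst_le hω h (hb.mono (mul_le_of_le_one_left hn.le hσ)) hbn hM
    _ = S * (Mμ * Mν) * ((n ^ 2 * N)⁻¹ * ((N * (y * Φ)) ^ (2 - l) * N ^ (1 / q + l / p))) := by
        ring
    _ ≤ S * (Mμ * Mν) * (Cv * (y * Φ) ^ (2 - l)) := by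
        exact mul_le_mul_of_nonneg_left (h.inv_mul_rpow_mul_rpow_le hN hn hyΦ hvol)
          (by positivity)
    _ ≤ stepConst s ρ C Cv * (Mμ * Mν) * (y * Φ) ^ (2 - l) := by
        rw [← mul_assoc, mul_right_comm S, stepConst]
        gcongr
        linarith

theorem mul_rpow_le_rpow_of_mul_le {W Q δ Φ a : ℝ} (hε : 0 < ε) (hε' : ε ≤ 1) (hδ : 0 < δ)
    (hδ' : δ ≤ 1) (hΦ : 0 ≤ Φ) (ha : 1 ≤ a) (hW : 1 ≤ W) (hQ : 92 / ε * W ≤ Q) :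
    W * (92 / (ε * δ ^ 3) * Φ) ^ a ≤ ((Q / δ ^ 2) ^ 2 * Φ) ^ a := by
  have hWQ : 1 ≤ 92 / ε * W :=
    one_le_mul_of_one_le_of_one_le ((one_le_div hε).2 (by linarith)) hW
  have h_base : W * (92 / (ε * δ ^ 3)) ≤ (Q / δ ^ 2) ^ 2 :=
    calc W * (92 / (ε * δ ^ 3)) = 92 / ε * W / δ ^ 3 := by field_simp
      _ ≤ Q ^ 2 / δ ^ 4 := by
          refine div_le_div₀ (sq_nonneg Q) ?_ (by positivity)
            (pow_le_pow_of_le_one hδ.le hδ' (by norm_num))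
          nlinarith
      _ = (Q / δ ^ 2) ^ 2 := by rw [div_pow, ← pow_mul]
  calc W * (92 / (ε * δ ^ 3) * Φ) ^ a
      ≤ W ^ a * (92 / (ε * δ ^ 3) * Φ) ^ a := by
        gcongr
        exact Real.self_le_rpow_of_one_le hW ha
    _ = (W * (92 / (ε * δ ^ 3)) * Φ) ^ a := by
        rw [← Real.mul_rpow (by positivity) (by positivity), mul_assoc]
    _ ≤ ((Q / δ ^ 2) ^ 2 * Φ) ^ a := by gcongr

theorem cylinderMass_step (ht : AdmissibleTimes ε t₀ n s' s'')
    (hω : IsConductance nbr ω) (hb : IsConcentricFamily nbr b)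
    (hu : IsPosSuperCaloric nbr ω (Set.Icc t₀ (t₀ + n ^ 2)) (b n) u)
    (h : MoserExponents s p q ρ l) (hiso : EdgeIsoperimetric nbr (1 / s) C) (hC : 0 ≤ C)
    (hCv : 0 ≤ Cv) (hvol : (#(b n) : ℝ) ^ (2 * (1 - 1 / s)) ≤ Cv * n ^ 2)
    (hM : MomentBound nbr ω (b n) p q Mμ Mν) {Q : ℝ}
    (hQ : 92 / ε * (stepConst s ρ C Cv * (Mμ * Mν)) ≤ Q) {γ : ℝ} (hγ : 0 < γ) (hγ' : γ ≤ 1 / 2)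
    (hσ' : 1 / 2 ≤ σ') (hσσ : σ' < σ) (hσ : σ ≤ 1) :
    cylinderMass nbr ω b t₀ n s' s'' u ((2 - l) * γ) σ' ≤
      ((Q / (σ - σ') ^ 2) ^ 2 * cylinderMass nbr ω b t₀ n s' s'' u γ σ) ^ (2 - l) := by
  have hW : 1 ≤ stepConst s ρ C Cv * (Mμ * Mν) :=
    one_le_mul_of_one_le_of_one_le (one_le_stepConst s ρ C hCv)
      (one_le_mul_of_one_le_of_one_le hM.one_le_mu hM.one_le_nu)
  have hΦ := cylinderMass_pos ht hω hb.mono hb.nonempty hu γ (hσ'.trans hσσ.le) hσ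
  exact (cylinderMass_two_sub_mul_le ht hω hb hu h hiso hC hvol hM hγ hγ' hσ' hσσ hσ).trans
    (mul_rpow_le_rpow_of_mul_le ht.ε_pos ht.ε_le_one (sub_pos.2 hσσ) (by linarith) hΦ.le
      (by linarith [h.l_lt_one]) hW hQ)

end Step

section Graph

variable {G : SimpleGraph V} {nbr : V → Finset V} {ball : V → ℝ → Finset V} {d : ℕ} {Creg : ℝ}

theorem isConductance_of_connected [Nontrivial V] (hG : G.Connected)
    (hnbr : ∀ x y, y ∈ nbr x ↔ G.Adj x y) {ω : V → V → ℝ} (hsymm : ∀ x y, ω x y = ω y x)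
    (hpos : ∀ x y, G.Adj x y → 0 < ω x y) (hzero : ∀ x y, ¬ G.Adj x y → ω x y = 0) :
    IsConductance nbr ω where
  symm := hsymm
  pos x y hy := hpos x y ((hnbr x y).1 hy)
  eq_zero x y hy := hzero x y (mt (hnbr x y).2 hy)
  nonempty x := (hG.preconnected.exists_adj_of_nontrivial x).imp fun y => (hnbr x y).2

theorem abs_dist_sub_dist_le_one {x y : V} (hxy : G.Adj x y) (x₀ : V) :
    |(G.dist x₀ x : ℝ) - G.dist x₀ y| ≤ 1 := by
  have h := hxy.diff_dist_adj (u := x₀)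
  rw [abs_sub_le_iff, sub_le_iff_le_add, sub_le_iff_le_add]
  norm_cast
  omega

theorem IsBallFamily.isCutoff (hball : IsBallFamily G ball) (hnbr : ∀ x y, y ∈ nbr x ↔ G.Adj x y)
    (x₀ : V) {r' r : ℝ} (hr : r' < r) :
    IsCutoff nbr (fun x => Set.projIcc (0 : ℝ) 1 zero_le_one ((r - G.dist x₀ x) / (r - r')))
      (ball x₀ r') (ball x₀ r) (1 / (r - r')) where
  nonneg x := (Set.projIcc (0 : ℝ) 1 zero_le_one _).2.1
  le_one x := (Set.projIcc (0 : ℝ) 1 zero_le_one _).2.2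
  eq_one x hx := by
    rw [Set.projIcc_of_right_le]
    rw [one_le_div (sub_pos.2 hr)]
    linarith [(hball _ _ _).1 hx]
  eq_zero x hx := by
    rw [Set.projIcc_of_le_left]
    exact div_nonpos_of_nonpos_of_nonneg (by linarith [not_le.1 (mt (hball _ _ _).2 hx)])
      (sub_pos.2 hr).le
  lipschitz x y hy := by
    refine (Set.abs_projIcc_sub_projIcc zero_le_one).trans ?_
    rw [← sub_div, abs_div, abs_of_pos (sub_pos.2 hr), sub_sub_sub_cancel_left, abs_sub_comm]
    exact div_le_div_of_nonneg_right (abs_dist_sub_dist_le_one ((hnbr x y).1 hy) x₀)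
      (sub_pos.2 hr).le

theorem IsBallFamily.isConcentricFamily (hball : IsBallFamily G ball)
    (hnbr : ∀ x y, y ∈ nbr x ↔ G.Adj x y) (x₀ : V) : IsConcentricFamily nbr (ball x₀) where
  mono := hball.mono x₀
  nonempty := ⟨x₀, hball.center_mem x₀ le_rfl⟩
  exists_isCutoff _ _ hr := ⟨_, hball.isCutoff hnbr x₀ hr⟩

theorem VolumeRegular.rpow_two_div_le (hreg : VolumeRegular ball d Creg) (hCreg : 0 ≤ Creg)
    (hd : d ≠ 0) (x : V) {r : ℝ} (hr : 1 ≤ r) :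
    (#(ball x r) : ℝ) ^ (2 / (d : ℝ)) ≤ Creg ^ (2 / (d : ℝ)) * r ^ 2 := by
  have hr₀ : 0 ≤ r := by linarith
  calc (#(ball x r) : ℝ) ^ (2 / (d : ℝ)) ≤ (Creg * r ^ d) ^ (2 / (d : ℝ)) := by
        gcongr
        exact (hreg x r hr).2
    _ = Creg ^ (2 / (d : ℝ)) * r ^ 2 := by
        rw [Real.mul_rpow hCreg (by positivity), ← Real.rpow_natCast, ← Real.rpow_mul hr₀,
          mul_div_cancel₀ _ (Nat.cast_ne_zero.2 hd), Real.rpow_two]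

theorem VolumeRegular.card_ball_le_of_half_le (hreg : VolumeRegular ball d Creg)
    (hball : IsBallFamily G ball) (hCreg : 0 < Creg) (x : V) {n r : ℝ} (hn : 1 ≤ n)
    (hr : n / 2 ≤ r) : (#(ball x n) : ℝ) ≤ (Creg ^ 2 + Creg) * 2 ^ d * #(ball x r) := by
  have hn_card := (hreg x n hn).2
  have hr_card : (0 : ℝ) < #(ball x r) :=
    Nat.cast_pos.2 (card_pos.2 ⟨x, hball.center_mem x (by linarith)⟩)
  rcases le_or_gt 2 n with h | h
  · have hr_vol : r ^ d ≤ Creg * #(ball x r) := (inv_mul_le_iff₀ hCreg).1 (hreg x r (by linarith)).1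
    calc (#(ball x n) : ℝ) ≤ Creg * (2 * r) ^ d := by
          refine hn_card.trans ?_
          gcongr
          linarith
      _ ≤ Creg * (2 ^ d * (Creg * #(ball x r))) := by
          rw [mul_pow]
          gcongr
      _ = Creg ^ 2 * 2 ^ d * #(ball x r) := by ring
      _ ≤ (Creg ^ 2 + Creg) * 2 ^ d * #(ball x r) := by
          gcongr
          linarith
  · calc (#(ball x n) : ℝ) ≤ Creg * 2 ^ d := by
          refine hn_card.trans ?_
          gcongr
      _ ≤ (Creg ^ 2 + Creg) * 2 ^ d := by
          gcongr
          linarith [sq_nonneg Creg]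
      _ ≤ (Creg ^ 2 + Creg) * 2 ^ d * #(ball x r) := by
          refine le_mul_of_one_le_right (by positivity) ?_
          exact_mod_cast hr_card

end Graph

section MoserIteration

variable {nbr : V → Finset V} {ω : V → V → ℝ} {b : ℝ → Finset V}
  {ε t₀ n s' s'' s p q ρ l C Cv Mμ Mν D θ c α β σ σ' : ℝ} {u : ℝ → V → ℝ}

theorem cylinderMass_rpow_one_div_le (ht : AdmissibleTimes ε t₀ n s' s'')
    (hω : IsConductance nbr ω) (hb : IsConcentricFamily nbr b)
    (hu : IsPosSuperCaloric nbr ω (Set.Icc t₀ (t₀ + n ^ 2)) (b n) u)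
    (h : MoserExponents s p q ρ l) (hiso : EdgeIsoperimetric nbr (1 / s) C) (hC : 0 ≤ C)
    (hCv : 0 ≤ Cv) (hvol : (#(b n) : ℝ) ^ (2 * (1 - 1 / s)) ≤ Cv * n ^ 2)
    (hM : MomentBound nbr ω (b n) p q Mμ Mν) (h_abs : IsAbsorbing (2 - l) θ c) {K Q : ℝ}
    (hQ : 92 / ε * (stepConst s ρ C Cv * (Mμ * Mν)) ≤ Q) (hQM : Mμ ≤ Q) (hK : 0 ≤ K)
    (hKQ : K ≤ Q) (hα : 0 < α) (hαβ : α < β / 2) (hβ : β ≤ 1 / 2) (hσ' : 1 / 2 ≤ σ')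
    (hσσ : σ' < σ) (hσ : σ ≤ 1) :
    (K * cylinderMass nbr ω b t₀ n s' s'' u β σ') ^ (1 / β) ≤
      (Q / (σ - σ') ^ 2) ^ ((2 * (2 - l) * (c + 1) + 1) * (1 / α - 1 / β)) *
        cylinderMass nbr ω b t₀ n s' s'' u α σ ^ (1 / α) := by
  set Φ := cylinderMass nbr ω b t₀ n s' s'' u
  set Z := Q / (σ - σ') ^ 2
  have hσ₁ : 1 / 2 ≤ σ := hσ'.trans hσσ.le
  have hΦ_pos : ∀ γ σ, 1 / 2 ≤ σ → σ ≤ 1 → 0 < Φ γ σ := fun γ _ =>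
    cylinderMass_pos ht hω hb.mono hb.nonempty hu γ
  have hΦβ := (hΦ_pos β σ' hσ' (hσσ.le.trans hσ)).le
  have hQ₁ : 1 ≤ Q := hM.one_le_mu.trans hQM
  have hQZ : Q ≤ Z := le_div_self (by linarith) (pow_pos (sub_pos.2 hσσ) 2)
    (pow_le_one₀ (sub_nonneg.2 hσσ.le) (by linarith))
  have ha : 1 < 2 - l := by linarith [h.l_lt_one]
  obtain ⟨k, γ, hγ, hγα, hγa, hk⟩ := exists_pow_mul_eq_near ha hα (by linarith : α ≤ β)
  have h_iter : Φ β σ' ≤ (Z ^ c * Φ γ σ) ^ ((2 - l) ^ k) := by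
    rw [← hk] at hβ ⊢
    exact le_rpow_pow_of_step ha h_abs hQ₁ (fun γ σ h₁ h₂ => (hΦ_pos γ σ h₁ h₂).le)
      (fun γ _ _ h₁ h₂ => cylinderMass_mono ht hω hb.mono hu γ h₁ h₂.le)
      (fun _ _ _ => cylinderMass_step ht hω hb hu h hiso hC hCv hvol hM hQ)
      k hγ hβ hσ' hσσ hσ
  have h_jensen : Φ γ σ ≤ Z * Φ α σ ^ (γ / α) :=
    cylinderMass_le_mul_rpow ht hω hb.mono hb.nonempty hu h.one_lt_p.le hγ hγα
      (hQ₁.trans hQZ) (hM.nrm_mu_le.trans (hQM.trans hQZ)) hσ₁ hσ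
  refine rpow_one_div_le_of_le_rpow_pow (hQ₁.trans hQZ) h_abs.c_pos.le (by linarith) hα hαβ
    hγ hγa hk (hΦ_pos α σ hσ₁ hσ) (h_iter.trans ?_) (mul_nonneg hK hΦβ)
    (mul_le_mul_of_nonneg_right (hKQ.trans hQZ) hΦβ)
  have := (hΦ_pos γ σ hσ₁ hσ).le
  gcongr

/-- The multiplicative constant of the Moser iteration. Here `Cv` bounds
`|B(x₀, n)| ^ (2 (1 - 1 / s)) / n ^ 2`, and `D` bounds `|B(x₀, n)| / |B(x₀, r)|` for
`r ≥ n / 2`. -/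
def moserConst (ε s ρ C Cv D : ℝ) : ℝ := 92 / ε * stepConst s ρ C Cv + 2 * D

theorem one_le_moserConst (s ρ C : ℝ) (hε : 0 < ε) (hε' : ε ≤ 1) (hCv : 0 ≤ Cv) (hD : 0 ≤ D) :
    1 ≤ moserConst ε s ρ C Cv D := by
  have : 1 ≤ 92 / ε * stepConst s ρ C Cv :=
    one_le_mul_of_one_le_of_one_le ((one_le_div hε).2 (by linarith)) (one_le_stepConst s ρ C hCv)
  unfold moserConst
  linarith

theorem nrmST_le_rpow_mul_nrmST (ht : AdmissibleTimes ε t₀ n s' s'')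
    (hω : IsConductance nbr ω) (hb : IsConcentricFamily nbr b)
    (hu : IsPosSuperCaloric nbr ω (Set.Icc t₀ (t₀ + n ^ 2)) (b n) u)
    (h : MoserExponents s p q ρ l) (hiso : EdgeIsoperimetric nbr (1 / s) C) (hC : 0 ≤ C)
    (hCv : 0 ≤ Cv) (hvol : (#(b n) : ℝ) ^ (2 * (1 - 1 / s)) ≤ Cv * n ^ 2) (hD : 0 ≤ D)
    (h_card : ∀ r, n / 2 ≤ r → (#(b n) : ℝ) ≤ D * #(b r))
    (hM : MomentBound nbr ω (b n) p q Mμ Mν) (h_abs : IsAbsorbing (2 - l) θ c)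
    (hα : 0 < α) (hαβ : α < β / 2) (hβ : β ≤ 1 / 2) (hσ' : 1 / 2 ≤ σ') (hσσ : σ' < σ)
    (hσ : σ ≤ 1) :
    nrmST (cylStart t₀ s' σ') (cylEnd t₀ n s'' σ') (b (σ' * n)) β (mu nbr ω) u ≤
      (moserConst ε s ρ C Cv D * (Mμ * Mν) / (σ - σ') ^ 2) ^
          ((2 * (2 - l) * (c + 1) + 1) * (1 / α - 1 / β)) *
        nrmST (cylStart t₀ s' σ) (cylEnd t₀ n s'' σ) (b (σ * n)) α (mu nbr ω) u := by
  set Q := moserConst ε s ρ C Cv D * (Mμ * Mν)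
  have hM₁ : 1 ≤ Mμ * Mν := one_le_mul_of_one_le_of_one_le hM.one_le_mu hM.one_le_nu
  have h_const := one_le_moserConst s ρ C ht.ε_pos ht.ε_le_one hCv hD
  have h_step : 0 ≤ 92 / ε * stepConst s ρ C Cv := mul_nonneg (div_nonneg (by norm_num) ht.ε_pos.le)
    (zero_le_one.trans (one_le_stepConst s ρ C hCv))
  have hQ : 92 / ε * (stepConst s ρ C Cv * (Mμ * Mν)) ≤ Q := by
    rw [← mul_assoc]
    exact mul_le_mul_of_nonneg_right (le_add_of_nonneg_right (by linarith)) (by linarith)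
  have hQM : Mμ ≤ Q :=
    (le_mul_of_one_le_right (zero_le_one.trans hM.one_le_mu) hM.one_le_nu).trans
      (le_mul_of_one_le_left (by linarith) h_const)
  have hQD : 2 * D ≤ Q :=
    (le_add_of_nonneg_left h_step).trans (le_mul_of_one_le_right (by linarith) hM₁)
  calc nrmST (cylStart t₀ s' σ') (cylEnd t₀ n s'' σ') (b (σ' * n)) β (mu nbr ω) u
      ≤ (2 * D * cylinderMass nbr ω b t₀ n s' s'' u β σ') ^ (1 / β) :=
        nrmST_le_mul_cylinderMass_rpow ht hω hb.mono hb.nonempty hu (by linarith)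
          (h_card _ (by nlinarith [ht.n_pos])) hσ' (hσσ.le.trans hσ)
    _ ≤ (Q / (σ - σ') ^ 2) ^ ((2 * (2 - l) * (c + 1) + 1) * (1 / α - 1 / β)) *
          cylinderMass nbr ω b t₀ n s' s'' u α σ ^ (1 / α) :=
        cylinderMass_rpow_one_div_le ht hω hb hu h hiso hC hCv hvol hM h_abs hQ hQM (by linarith)
          hQD hα hαβ hβ hσ' hσσ hσ
    _ ≤ _ := by
        gcongr
        exact cylinderMass_rpow_le_nrmST ht hω hb.mono hb.nonempty hu hα (hσ'.trans hσσ.le) hσ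

end MoserIteration

end RCM

open RCM in
/-- **Reverse parabolic Moser iteration for super-caloric functions.** -/
theorem reverse_parabolic_moser_iteration_supercaloric
    (d : ℕ) (hd : 2 ≤ d) (Creg Criso : ℝ) (hCreg : 0 < Creg) (hCriso : 0 < Criso)
    (p q : ℝ≥0∞) (hp : 1 < p) (hq : 1 < q) (hpq : p⁻¹ + q⁻¹ < 2 / (d : ℝ≥0∞))
    (ε : ℝ) (hε : 0 < ε) (hε' : ε < 1 / 4) :
    ∃ C₁₀ κ : ℝ, 0 < C₁₀ ∧ 0 < κ ∧
      ∀ (V : Type) (G : SimpleGraph V) (nbr : V → Finset V)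
        (_ : ∀ x y, y ∈ nbr x ↔ G.Adj x y)
        (_ : Infinite V) (_ : G.Connected)
        (ball : V → ℝ → Finset V)
        (_ : ∀ (x : V) (r : ℝ) (y : V), y ∈ ball x r ↔ (G.dist x y : ℝ) ≤ r)
        (_ : ∀ (x : V) (r : ℝ), 1 ≤ r →
              Creg⁻¹ * r ^ d ≤ ((ball x r).card : ℝ) ∧ ((ball x r).card : ℝ) ≤ Creg * r ^ d)
        (_ : ∀ (x : V) (r : ℝ) (A : Finset V), 1 ≤ r → A.Nonempty → A ⊆ ball x r →
              (A.card : ℝ) < ((ball x r).card : ℝ) / 2 →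
              Criso / r ≤ ((RCM.relBdry G (ball x r) A).card : ℝ) / (A.card : ℝ))
        (ω : V → V → ℝ)
        (_ : ∀ x y, ω x y = ω y x)
        (_ : ∀ x y, G.Adj x y → 0 < ω x y)
        (_ : ∀ x y, ¬ G.Adj x y → ω x y = 0)
        (x₀ : V) (t₀ n s' s'' : ℝ) (_ : 0 ≤ t₀) (_ : 1 ≤ n)
        (_ : t₀ ≤ s') (_ : s' ≤ s'') (_ : s'' ≤ t₀ + n ^ 2)
        (_ : ε * n ^ 2 ≤ s' - t₀)
        (_ : ε * n ^ 2 ≤ t₀ + n ^ 2 - s'')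
        (u : ℝ → V → ℝ)
        (_ : ∀ t ∈ Set.Icc t₀ (t₀ + n ^ 2), ∀ x, 0 < u t x)
        (_ : SuperCaloric nbr ω (Set.Icc t₀ (t₀ + n ^ 2)) (ball x₀ n : Set V) u)
        (β : ℝ) (_ : 0 < β) (_ : β < 1 / 2)
        (α : ℝ) (_ : 0 < α) (_ : α < β / 2)
        (σ' σ : ℝ) (_ : 1 / 2 ≤ σ') (_ : σ' < σ) (_ : σ ≤ 1),
        nrmST (σ' * t₀ + (1 - σ') * s') ((1 - σ') * s'' + σ' * (t₀ + n ^ 2))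
            (ball x₀ (σ' * n)) β (mu nbr ω) u ≤
          (C₁₀ * (max 1 (nrmE (ball x₀ n) p (mu nbr ω)) *
              max 1 (nrmE (ball x₀ n) q (nu nbr ω))) / (σ - σ') ^ 2) ^
              (κ * (1 / α - 1 / β)) *
            nrmST (σ * t₀ + (1 - σ) * s') ((1 - σ) * s'' + σ * (t₀ + n ^ 2))
              (ball x₀ (σ * n)) α (mu nbr ω) u := by
  obtain ⟨p', q', hp', hq', hpp', hqq', hpq'⟩ := exists_real_exponents (by omega) hp hq hpq
  obtain ⟨s, ρ, l, hs, h⟩ := exists_moserExponents (D := d) (mod_cast hd) hp' hq' hpq'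
  obtain ⟨θ, c, h_abs⟩ := exists_isAbsorbing (a := 2 - l) (by linarith [h.l_lt_one])
  have hCv : 0 ≤ Creg ^ (2 / (d : ℝ)) := by positivity
  have hD : 0 ≤ (Creg ^ 2 + Creg) * 2 ^ d := by positivity
  refine ⟨moserConst ε s ρ (isoConst d Creg Criso) _ _, 2 * (2 - l) * (c + 1) + 1,
    one_pos.trans_le (one_le_moserConst _ _ _ hε (by linarith) hCv hD),
    by nlinarith [h.l_lt_one, h_abs.c_pos], ?_⟩
  intro V G nbr hnbr _ hG ball hball hreg hriso ω hsymm hpos hzero x₀ t₀ n s' s'' _ hn _ hs's'' _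
    h_start h_end u hu hu' β _ hβ α hα hαβ σ' σ hσ' hσσ hσ
  have hiso := edgeIsoperimetric_of_relIsoperimetric hnbr hball (by omega) hCreg hCriso hreg hriso
  have hvol : (#(ball x₀ n) : ℝ) ^ (2 * (1 - 1 / s)) ≤ Creg ^ (2 / (d : ℝ)) * n ^ 2 := by
    rw [hs, sub_sub_cancel, mul_one_div]
    exact VolumeRegular.rpow_two_div_le hreg hCreg.le (by omega) x₀ hn
  have hb := IsBallFamily.isConcentricFamily hball hnbr x₀
  exact nrmST_le_rpow_mul_nrmST ⟨hε, hn, hs's'', h_start, h_end⟩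
    (isConductance_of_connected hG hnbr hsymm hpos hzero) hb ⟨hu', hu⟩ h (hs ▸ hiso)
    (isoConst_nonneg d hCreg.le hCriso.le) hCv hvol hD
    (fun r => VolumeRegular.card_ball_le_of_half_le hreg hball hCreg x₀ hn)
    (momentBound_max_nrmE (hb.nonempty.mono (hb.mono (by linarith))) nbr ω (by linarith)
      (by linarith) hpp' hqq') h_abs hα hαβ hβ.le hσ' hσσ hσ
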